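/- Let Q₁, Q₂, Q₃ : ℝ³ → ℝ be real quadratic forms with symmetric matrices M₁, M₂, M₃, let f := Q₁Q₃ − Q₂², and assume: (i) fderiv ℝ f P ≠ 0 for every P ∈ ℝ³∖{0} with f(P) = 0; (ii) the binary sextic p(t₀, t₁) := det(t₀²M₁ + 2t₀t₁M₂ + t₁²M₃) is nonzero and squarefree in ℂ[t₀, t₁]. Let ℝP² be the quotient topological space of ℝ³∖{0} by the scaling action of ℝ∖{0}, let S₂ := { [P] ∈ ℝP² : Q₁(P) ≥ 0 ∨ f(P) ≤ 0 } and Z := { [P] ∈ ℝP² : f(P) = 0 } (both conditions are well-defined since Q₁ and f are homogeneous of even degree). If S₂ is nonempty and not connected, then the number of connected components of S₂ equals the number of connected components of Z, and this common number is 2 or 3. (That is, if the real locus Y(ℝ) of the conic bundle is disconnected, then Δ(ℝ) consists of two or three ovals, with the same number of components as Y(ℝ).) -/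

import Mathlib

/-- The scaling relation on nonzero vectors of `ℝⁿ`. -/
def projRel (n : ℕ) (v w : {x : Fin n → ℝ // x ≠ 0}) : Prop :=
  ∃ c : ℝ, c ≠ 0 ∧ c • (v : Fin n → ℝ) = (w : Fin n → ℝ)

/-- The real projective space `ℝPⁿ⁻¹`, as the quotient topological space of `ℝⁿ ∖ {0}` by the
scaling action of `ℝ ∖ {0}`. -/
def RP (n : ℕ) : Type := Quot (projRel n)

instance (n : ℕ) : TopologicalSpace (RP n) :=
  inferInstanceAs (TopologicalSpace (Quot (projRel n)))

open MvPolynomial in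
/-- The binary sextic form `det(t₀²M₁ + 2t₀t₁M₂ + t₁²M₃)`, as a polynomial in `ℂ[t₀, t₁]`. -/
noncomputable def binarySextic (M₁ M₂ M₃ : Matrix (Fin 3) (Fin 3) ℝ) :
    MvPolynomial (Fin 2) ℂ :=
  Matrix.det (Matrix.of fun i j =>
    X 0 ^ 2 * C (M₁ i j : ℂ) + 2 * X 0 * X 1 * C (M₂ i j : ℂ) + X 1 ^ 2 * C (M₃ i j : ℂ))

/-!
If for every `t ≠ 0` the form `q_t = t₀²Q₁ + 2t₀t₁Q₂ + t₁²Q₃` were nonnegative somewhere, then `S₂`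
would be the union of the nonempty connected sets `{q_t ≥ 0}`, which vary semicontinuously over the
connected set of parameters, and so `S₂` would be connected. Hence some `q_t` is negative definite,
which forces `S₂ = {f ≤ 0}`.

Let `C` be a component of `{f ≤ 0}`. By smoothness `f` is negative somewhere on each of the other
components; pick such a point `z`. A line through `z` that meets `C` leaves `{f < 0}` at `z` and
crosses `{f > 0}` before reaching `C`, on both sides. This accounts for four roots of the quartic
`f`, so `f < 0` strictly between any two points of `C` on the line. Hence `C` is a family of
intervals over the sphere of directions at `z`, whose end points form `C ∩ {f = 0}`. Reversing the
direction exchanges lower and upper ends. If `C ∩ {f = 0}` were a disjoint union of two closed sets,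
connectedness of the sphere would therefore prevent them from sharing an interval, and they would
disconnect `C`. Thus each component of `S₂` contains exactly one of `Z`.

For the upper bound, choose the coordinate `x` on the parameter line so that the negative definite
member lies at infinity. The set `T` of the `x` for which `q_x` is nonnegative somewhere is then
compact, and each component of `S₂` is swept out by a component of `T`. The latter are intervals
whose end points are zeros of `det(-q_x)`, a polynomial of degree at most `2n` for forms in `n`
variables; since these zeros are simple, the intervals are nondegenerate and there are at most `n`
of them.
-/

open Set Topology Filter

namespace RP

variable {n : ℕ}

/-- The point `[v]` of projective space with homogeneous coordinates `v`. -/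
def mk (v : {v : Fin n → ℝ // v ≠ 0}) : RP n := Quot.mk (projRel n) v

theorem mk_eq_mk {v w : {v : Fin n → ℝ // v ≠ 0}} :
    mk v = mk w ↔ ∃ c : ℝ, c ≠ 0 ∧ c • (v : Fin n → ℝ) = w := by
  have h : Equivalence (projRel n) :=
    { refl := fun _ => ⟨1, one_ne_zero, one_smul ℝ _⟩
      symm := fun ⟨c, hc, hcv⟩ => ⟨c⁻¹, inv_ne_zero hc, (inv_smul_eq_iff₀ hc).2 hcv.symm⟩
      trans := fun ⟨c, hc, hcv⟩ ⟨d, hd, hdv⟩ =>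
        ⟨d * c, mul_ne_zero hd hc, by rw [mul_smul, hcv, hdv]⟩ }
  exact h.quot_mk_eq_iff v w

theorem mk_surjective : Function.Surjective (mk (n := n)) := Quot.mk_surjective

theorem isOpenQuotientMap_mk : IsOpenQuotientMap (mk (n := n)) := by
  refine ⟨mk_surjective, continuous_quot_mk, fun U hU => ?_⟩
  let scale (c : {c : ℝ // c ≠ 0}) (v : {v : Fin n → ℝ // v ≠ 0}) : {v : Fin n → ℝ // v ≠ 0} :=
    ⟨c.1 • v.1, smul_ne_zero c.2 v.2⟩
  have saturation : mk ⁻¹' (mk '' U) = ⋃ c, scale c ⁻¹' U := by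
    ext w
    simp only [mem_preimage, mem_image, mem_iUnion]
    constructor
    · rintro ⟨v, hv, hvw⟩
      obtain ⟨c, hc, hcw⟩ := mk_eq_mk.1 hvw.symm
      exact ⟨⟨c, hc⟩, by rwa [show scale ⟨c, hc⟩ w = v from Subtype.ext hcw]⟩
    · rintro ⟨c, hc⟩
      exact ⟨_, hc, (mk_eq_mk.2 ⟨c, c.2, rfl⟩).symm⟩
  have hopen : IsOpen (mk ⁻¹' (mk '' U)) := by
    rw [saturation]
    exact isOpen_iUnion fun c => hU.preimage (by fun_prop)
  exact hopen

theorem mk_eq_mk_iff_mul_eq_mul {v w : {v : Fin n → ℝ // v ≠ 0}} :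
    mk v = mk w ↔ ∀ i j, v.1 i * w.1 j = v.1 j * w.1 i := by
  rw [mk_eq_mk]
  constructor
  · rintro ⟨c, -, hcw⟩ i j
    simp only [← hcw, Pi.smul_apply, smul_eq_mul]
    ring
  · intro h
    obtain ⟨i, hi⟩ := Function.ne_iff.1 v.2
    have hi : v.1 i ≠ 0 := hi
    have hw : (w.1 i / v.1 i) • v.1 = w.1 := by
      ext j
      rw [Pi.smul_apply, smul_eq_mul, div_mul_eq_mul_div, div_eq_iff hi]
      linarith [h i j]
    refine ⟨w.1 i / v.1 i, fun hc => w.2 ?_, hw⟩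
    rw [← hw, hc, zero_smul]

instance : T2Space (RP n) := by
  rw [t2Space_iff_of_isOpenQuotientMap isOpenQuotientMap_mk]
  simp only [mk_eq_mk_iff_mul_eq_mul, ofPred_forall]
  have hcoord (i : Fin n) : Continuous fun v : {v : Fin n → ℝ // v ≠ 0} => v.1 i :=
    (continuous_apply i).comp continuous_subtype_val
  exact isClosed_iInter fun i => isClosed_iInter fun j =>
    isClosed_eq (((hcoord i).comp continuous_fst).mul ((hcoord j).comp continuous_snd))
      (((hcoord j).comp continuous_fst).mul ((hcoord i).comp continuous_snd))

instance : LocallyConnectedSpace (RP n) :=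
  have : LocallyConnectedSpace {v : Fin n → ℝ // v ≠ 0} :=
    (isOpen_ne (x := (0 : Fin n → ℝ))).locallyConnectedSpace
  isOpenQuotientMap_mk.isQuotientMap.isCoinducing.locallyConnectedSpace

/-- The points of projective space with homogeneous coordinates in `A`. -/
def locus (A : Set (Fin n → ℝ)) : Set (RP n) := {x | ∃ v, mk v = x ∧ (v : Fin n → ℝ) ∈ A}

/-- Invariance of a set of vectors under nonzero scalars, so that it is determined by its
`RP.locus` away from the origin. -/
def IsScaleInvariant (A : Set (Fin n → ℝ)) : Prop := ∀ c : ℝ, c ≠ 0 → ∀ v ∈ A, c • v ∈ A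

theorem IsScaleInvariant.mk_mem_locus {A : Set (Fin n → ℝ)} (hA : IsScaleInvariant A)
    {v : {v : Fin n → ℝ // v ≠ 0}} : mk v ∈ locus A ↔ (v : Fin n → ℝ) ∈ A := by
  constructor
  · rintro ⟨w, hwv, hw⟩
    obtain ⟨c, hc, hcv⟩ := mk_eq_mk.1 hwv
    exact hcv ▸ hA c hc w hw
  · exact fun hv => ⟨v, rfl, hv⟩

theorem IsScaleInvariant.isClosed_locus {A : Set (Fin n → ℝ)} (hA : IsScaleInvariant A)
    (h : IsClosed A) : IsClosed (locus A) := by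
  rw [← isOpenQuotientMap_mk.isQuotientMap.isClosed_preimage]
  simpa only [preimage, hA.mk_mem_locus] using h.preimage continuous_subtype_val

theorem isPreconnected_locus {A : Set (Fin n → ℝ)} (hA : IsPreconnected A) (h0 : 0 ∉ A) :
    IsPreconnected (locus A) := by
  have himage : locus A = mk '' (Subtype.val ⁻¹' A) := by
    ext x; simp only [locus, mem_ofPred_eq, mem_image, mem_preimage, and_comm]
  rw [himage]
  refine IsPreconnected.image ?_ _ isOpenQuotientMap_mk.continuous.continuousOn
  have hval : ((↑) : {v : Fin n → ℝ // v ≠ 0} → Fin n → ℝ) '' ((↑) ⁻¹' A) = A :=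
    image_preimage_eq_of_subset fun v hv => ⟨⟨v, fun h => h0 (h ▸ hv)⟩, rfl⟩
  exact IsInducing.subtypeVal.isPreconnected_image.1 (hval.symm ▸ hA)

theorem zero_notMem_segment {v w : {v : Fin n → ℝ // v ≠ 0}} (h : mk v ≠ mk w) :
    (0 : Fin n → ℝ) ∉ segment ℝ v.1 w.1 := by
  rintro ⟨a, b, -, -, hab, hzero⟩
  refine h (mk_eq_mk_iff_mul_eq_mul.2 fun i j => ?_)
  have hi : a * v.1 i + b * w.1 i = 0 := congrFun hzero i
  have hj : a * v.1 j + b * w.1 j = 0 := congrFun hzero j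
  linear_combination (w.1 j - v.1 j) * hi + (v.1 i - w.1 i) * hj -
    (v.1 i * w.1 j - v.1 j * w.1 i) * hab

end RP

section NonnegLocus

open Matrix

variable {n : ℕ}

theorem dotProduct_mulVec_smul_smul (M : Matrix (Fin n) (Fin n) ℝ) (c : ℝ) (v : Fin n → ℝ) :
    (c • v) ⬝ᵥ M *ᵥ (c • v) = c ^ 2 * (v ⬝ᵥ M *ᵥ v) := by
  rw [mulVec_smul, dotProduct_smul, smul_dotProduct, smul_eq_mul, smul_eq_mul, sq, mul_assoc]

theorem dotProduct_mulVec_smul_add_smul {M : Matrix (Fin n) (Fin n) ℝ} (hM : M.IsSymm) (a b : ℝ)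
    (v w : Fin n → ℝ) :
    (a • v + b • w) ⬝ᵥ M *ᵥ (a • v + b • w) =
      a ^ 2 * (v ⬝ᵥ M *ᵥ v) + 2 * (a * b) * (v ⬝ᵥ M *ᵥ w) + b ^ 2 * (w ⬝ᵥ M *ᵥ w) := by
  have hvw : w ⬝ᵥ M *ᵥ v = v ⬝ᵥ M *ᵥ w := by
    rw [dotProduct_mulVec, ← mulVec_transpose, hM.eq, dotProduct_comm]
  simp only [mulVec_add, mulVec_smul, dotProduct_add, add_dotProduct, dotProduct_smul,
    smul_dotProduct, smul_eq_mul, hvw]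
  ring

/-- The points of projective space at which the quadratic form with matrix `M` is nonnegative. -/
def nonnegLocus (M : Matrix (Fin n) (Fin n) ℝ) : Set (RP n) := RP.locus {v | 0 ≤ v ⬝ᵥ M *ᵥ v}

theorem isScaleInvariant_nonneg (M : Matrix (Fin n) (Fin n) ℝ) :
    RP.IsScaleInvariant {v | 0 ≤ v ⬝ᵥ M *ᵥ v} := fun c _ v hv => by
  rw [mem_ofPred_eq, dotProduct_mulVec_smul_smul]
  exact mul_nonneg (sq_nonneg c) hv

theorem mk_mem_nonnegLocus {M : Matrix (Fin n) (Fin n) ℝ} {v : {v : Fin n → ℝ // v ≠ 0}} :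
    RP.mk v ∈ nonnegLocus M ↔ 0 ≤ (v : Fin n → ℝ) ⬝ᵥ M *ᵥ v :=
  (isScaleInvariant_nonneg M).mk_mem_locus

/-- Replacing `w` by `-w` makes the polar form of `M` at `v` and `w` nonnegative, and then the
whole segment from `v` to `w` lies in the nonnegative locus. -/
theorem isPreconnected_nonnegLocus {M : Matrix (Fin n) (Fin n) ℝ} (hM : M.IsSymm) :
    IsPreconnected (nonnegLocus M) := by
  refine isPreconnected_of_forall_pair ?_
  rintro _ ⟨v, rfl, hv : 0 ≤ v.1 ⬝ᵥ M *ᵥ v.1⟩ _ ⟨w, rfl, hw : 0 ≤ w.1 ⬝ᵥ M *ᵥ w.1⟩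
  wlog hvw : 0 ≤ v.1 ⬝ᵥ M *ᵥ w.1 generalizing w
  · have hneg : RP.mk w = RP.mk ⟨-w.1, neg_ne_zero.2 w.2⟩ :=
      RP.mk_eq_mk.2 ⟨-1, by norm_num, neg_one_smul ℝ w.1⟩
    rw [hneg]
    exact this _ (by simpa [mulVec_neg] using hw) (by simpa [mulVec_neg] using (not_le.1 hvw).le)
  by_cases hmk : RP.mk v = RP.mk w
  · exact ⟨{RP.mk v}, singleton_subset_iff.2 (mk_mem_nonnegLocus.2 hv), rfl, hmk.symm,
      isPreconnected_singleton⟩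
  · refine ⟨RP.locus (segment ℝ v.1 w.1), ?_, ⟨v, rfl, left_mem_segment ..⟩,
      ⟨w, rfl, right_mem_segment ..⟩,
      RP.isPreconnected_locus (convex_segment ..).isPreconnected (RP.zero_notMem_segment hmk)⟩
    rintro _ ⟨u, rfl, a, b, ha, hb, -, hu⟩
    rw [mk_mem_nonnegLocus, ← hu, dotProduct_mulVec_smul_add_smul hM]
    positivity

section Family

variable {X : Type*} [TopologicalSpace X] {M : X → Matrix (Fin n) (Fin n) ℝ}

theorem isClosed_nonnegLocus_inter_nonempty (hM : Continuous M) {t : Set (RP n)}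
    (ht : IsClosed t) : IsClosed {x | (nonnegLocus (M x) ∩ t).Nonempty} := by
  let toVec (v : Metric.sphere (0 : Fin n → ℝ) 1) : {v : Fin n → ℝ // v ≠ 0} :=
    ⟨v, ne_zero_of_mem_unit_sphere v⟩
  have htoVec : Continuous toVec := continuous_subtype_val.subtype_mk _
  have hclosed : IsClosed {q : X × Metric.sphere (0 : Fin n → ℝ) 1 |
      0 ≤ (q.2 : Fin n → ℝ) ⬝ᵥ M q.1 *ᵥ q.2 ∧ RP.mk (toVec q.2) ∈ t} := by
    have hq : Continuous fun q : X × Metric.sphere (0 : Fin n → ℝ) 1 => (q.2 : Fin n → ℝ) := by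
      fun_prop
    exact (isClosed_le continuous_const
      (hq.dotProduct ((hM.comp continuous_fst).matrix_mulVec hq))).and
      (ht.preimage (RP.isOpenQuotientMap_mk.continuous.comp (htoVec.comp continuous_snd)))
  convert isClosedMap_fst_of_compactSpace _ hclosed using 1
  ext x
  constructor
  · rintro ⟨_, ⟨v, rfl, hv⟩, hvt⟩
    have hnorm : ‖v.1‖ ≠ 0 := norm_ne_zero_iff.2 v.2
    let u : Metric.sphere (0 : Fin n → ℝ) 1 :=
      ⟨‖v.1‖⁻¹ • v.1, by simp [norm_smul, hnorm]⟩
    have huv : RP.mk v = RP.mk (toVec u) := RP.mk_eq_mk.2 ⟨_, inv_ne_zero hnorm, rfl⟩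
    exact ⟨(x, u), ⟨isScaleInvariant_nonneg _ _ (inv_ne_zero hnorm) _ hv, huv ▸ hvt⟩, rfl⟩
  · rintro ⟨⟨x, u⟩, ⟨hu, hut⟩, rfl⟩
    exact ⟨_, mk_mem_nonnegLocus.2 hu, hut⟩

theorem isClosed_nonnegLocus_nonempty (hM : Continuous M) :
    IsClosed {x | (nonnegLocus (M x)).Nonempty} := by
  simpa using isClosed_nonnegLocus_inter_nonempty hM isClosed_univ

theorem isPreconnected_biUnion_nonnegLocus (hM : Continuous M) (hsymm : ∀ x, (M x).IsSymm)
    {I : Set X} (hI : IsPreconnected I) (hne : ∀ x ∈ I, (nonnegLocus (M x)).Nonempty) :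
    IsPreconnected (⋃ x ∈ I, nonnegLocus (M x)) := by
  rw [isPreconnected_closed_iff]
  intro t t' ht ht' hcover ⟨y, hy, hyt⟩ ⟨y', hy', hyt'⟩
  simp only [mem_iUnion₂] at hy hy'
  obtain ⟨⟨x, hxI, hyx⟩, x', hxI', hyx'⟩ := And.intro hy hy'
  have hsub : ∀ x ∈ I, nonnegLocus (M x) ⊆ t ∪ t' := fun x hx =>
    (subset_biUnion_of_mem hx).trans hcover
  obtain ⟨z, hzI, hzt, hzt'⟩ := isPreconnected_closed_iff.1 hI _ _
    (isClosed_nonnegLocus_inter_nonempty hM ht) (isClosed_nonnegLocus_inter_nonempty hM ht')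
    (fun z hz => by
      obtain ⟨w, hw⟩ := hne z hz
      exact (hsub z hz hw).imp (fun h => ⟨w, hw, h⟩) fun h => ⟨w, hw, h⟩)
    ⟨x, hxI, y, hyx, hyt⟩ ⟨x', hxI', y', hyx', hyt'⟩
  exact (isPreconnected_closed_iff.1 (isPreconnected_nonnegLocus (hsymm z)) t t' ht ht'
    (hsub z hzI) hzt hzt').mono (inter_subset_inter_left _ (subset_biUnion_of_mem hzI))

end Family

theorem det_neg_pos_of_nonnegLocus_eq_empty {M : Matrix (Fin n) (Fin n) ℝ} (hM : M.IsSymm)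
    (h : nonnegLocus M = ∅) : 0 < (-M).det := by
  have hpos : (-M).PosDef := by
    refine .of_dotProduct_mulVec_pos (isHermitian_iff_isSymm.2 hM).neg fun v hv => ?_
    rw [star_trivial, neg_mulVec, dotProduct_neg, neg_pos]
    by_contra! hnonneg
    exact (h ▸ notMem_empty _ : RP.mk ⟨v, hv⟩ ∉ nonnegLocus M) ⟨_, rfl, hnonneg⟩
  exact hpos.det_pos

theorem det_neg_eq_zero_of_mem_frontier {X : Type*} [TopologicalSpace X]
    {M : X → Matrix (Fin n) (Fin n) ℝ} (hM : Continuous M) (hsymm : ∀ x, (M x).IsSymm) {x : X}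
    (hx : x ∈ frontier {x | (nonnegLocus (M x)).Nonempty}) : (-M x).det = 0 := by
  rw [frontier_eq_closure_inter_closure, (isClosed_nonnegLocus_nonempty hM).closure_eq] at hx
  obtain ⟨⟨_, v, rfl, hv : 0 ≤ v.1 ⬝ᵥ M x *ᵥ v.1⟩, hcl⟩ := hx
  have hnonpos : ∀ w, w ⬝ᵥ M x *ᵥ w ≤ 0 := by
    have hclosed : IsClosed {x | ∀ w, w ⬝ᵥ M x *ᵥ w ≤ 0} := by
      simp only [ofPred_forall]
      exact isClosed_iInter fun w => isClosed_le
        (continuous_const.dotProduct (hM.matrix_mulVec continuous_const)) continuous_const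
    refine closure_minimal (fun y hy w => ?_) hclosed hcl
    by_contra! hw
    have hw0 : w ≠ 0 := by rintro rfl; simp at hw
    exact hy ⟨_, ⟨w, hw0⟩, rfl, hw.le⟩
  have hpsd : (-M x).PosSemidef :=
    .of_dotProduct_mulVec_nonneg (isHermitian_iff_isSymm.2 (hsymm x)).neg fun w => by
      simpa [neg_mulVec] using hnonpos w
  refine exists_mulVec_eq_zero_iff.1 ⟨v, v.2, (hpsd.dotProduct_mulVec_zero_iff v.1).1 ?_⟩
  simpa [neg_mulVec] using (hnonpos v).antisymm hv

end NonnegLocus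

section Band

variable {X : Type*} [TopologicalSpace X]

/-- `B` is a compact family of intervals `{u | (x, u) ∈ B}`, and `E ⊆ B` is a closed set of
boundary points containing the ends of each of them. It encodes a region cut out by lines through
a point together with its boundary curve. -/
structure IsBand (B E : Set (X × ℝ)) : Prop where
  isCompact : IsCompact B
  isClosed : IsClosed E
  subset : E ⊆ B
  isOpen_diff : IsOpen (B \ E)
  between : ∀ {x : X} {a u b : ℝ}, (x, a) ∈ B → (x, b) ∈ B → a < u → u < b → (x, u) ∈ B \ E

namespace IsBand

variable {B E T T' : Set (X × ℝ)}

theorem notMem_of_lt_of_lt (h : IsBand B E) {x : X} {a u b : ℝ} (ha : (x, a) ∈ E)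
    (hb : (x, b) ∈ E) (hau : a < u) (hub : u < b) : (x, u) ∉ E :=
  (h.between (h.subset ha) (h.subset hb) hau hub).2

theorem preimage_neg (h : IsBand B E) :
    IsBand (Prod.map id Neg.neg ⁻¹' B) (Prod.map (id : X → X) (Neg.neg : ℝ → ℝ) ⁻¹' E) := by
  have hcont : Continuous (Prod.map id Neg.neg : X × ℝ → X × ℝ) := by fun_prop
  refine ⟨?_, h.isClosed.preimage hcont, preimage_mono h.subset,
    h.isOpen_diff.preimage hcont, fun ha hb hau hub =>
      h.between hb ha (neg_lt_neg hub) (neg_lt_neg hau)⟩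
  exact ((Homeomorph.refl X).prodCongr (Homeomorph.neg ℝ)).isCompact_preimage.2 h.isCompact

variable [T2Space X]

theorem exists_mem_le (h : IsBand B E) {x : X} {w : ℝ} (hw : (x, w) ∈ B) :
    ∃ a, (x, a) ∈ E ∧ a ≤ w := by
  have hfibre : IsCompact {u | (x, u) ∈ B} :=
    (h.isCompact.image continuous_snd).of_isClosed_subset
      (h.isCompact.isClosed.preimage (by fun_prop)) fun u hu => ⟨(x, u), hu, rfl⟩
  obtain ⟨a, ha, hmin⟩ := hfibre.exists_isLeast ⟨w, hw⟩
  refine ⟨a, by_contra fun haE => ?_, hmin hw⟩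
  have hnear : ∀ᶠ u in 𝓝 a, (x, u) ∈ B \ E :=
    (h.isOpen_diff.preimage (Continuous.prodMk_right x)).mem_nhds ⟨ha, haE⟩
  obtain ⟨u, hu, hua⟩ := (hnear.filter_mono nhdsWithin_le_nhds |>.and
    (self_mem_nhdsWithin : Iio a ∈ 𝓝[<] a)).exists
  exact (hmin hu.1).not_gt hua

theorem exists_mem_ge (h : IsBand B E) {x : X} {w : ℝ} (hw : (x, w) ∈ B) :
    ∃ b, (x, b) ∈ E ∧ w ≤ b := by
  obtain ⟨a, ha, hle⟩ := h.preimage_neg.exists_mem_le (x := x) (w := -w) (by simpa using hw)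
  exact ⟨-a, ha, le_neg_of_le_neg hle⟩

theorem isClosed_setOf_lt_mem (h : IsBand B E) (hT : IsClosed T) (hT' : IsClosed T')
    (hdisj : Disjoint T T') (hTE : T ∪ T' = E) :
    IsClosed {x | ∃ a b, a < b ∧ (x, a) ∈ T ∧ (x, b) ∈ T'} := by
  have hcompact {S : Set (X × ℝ)} (hS : IsClosed S) (hSE : S ⊆ E) : IsCompact S :=
    h.isCompact.of_isClosed_subset hS (hSE.trans h.subset)
  have hpairs : IsCompact ((T ×ˢ T') ∩ {p | p.1.1 = p.2.1 ∧ p.1.2 ≤ p.2.2}) :=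
    ((hcompact hT (hTE ▸ subset_union_left)).prod
      (hcompact hT' (hTE ▸ subset_union_right))).inter_right
      ((isClosed_eq (by fun_prop) (by fun_prop)).and (isClosed_le (by fun_prop) (by fun_prop)))
  convert (hpairs.image (f := fun p => p.1.1) (by fun_prop)).isClosed using 1
  ext x
  constructor
  · rintro ⟨a, b, hab, ha, hb⟩
    exact ⟨((x, a), (x, b)), ⟨⟨ha, hb⟩, rfl, hab.le⟩, rfl⟩
  · rintro ⟨⟨⟨y, a⟩, ⟨z, b⟩⟩, ⟨⟨ha, hb⟩, hyz : y = z, hab⟩, hyx : y = x⟩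
    subst hyz hyx
    refine ⟨a, b, lt_of_le_of_ne hab ?_, ha, hb⟩
    rintro rfl
    exact disjoint_left.1 hdisj ha hb

theorem isOpen_setOf_lt_mem (h : IsBand B E) (hT : IsClosed T) (hT' : IsClosed T')
    (hdisj : Disjoint T T') (hTE : T ∪ T' = E) :
    IsOpen {x | ∃ a b, a < b ∧ (x, a) ∈ T ∧ (x, b) ∈ T'} := by
  have hsub : T ⊆ E ∧ T' ⊆ E := by simp [← hTE]
  have hproj {S : Set (X × ℝ)} (hS : IsClosed S) (hSE : S ⊆ E) : IsClosed (Prod.fst '' S) :=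
    ((h.isCompact.of_isClosed_subset hS (hSE.trans h.subset)).image continuous_fst).isClosed
  rw [isOpen_iff_mem_nhds]
  rintro x ⟨a, b, hab, ha, hb⟩
  obtain ⟨m, ham, hmb⟩ := exists_between hab
  have haE := hsub.1 ha
  have hbE := hsub.2 hb
  have hm := h.between (h.subset haE) (h.subset hbE) ham hmb
  have hlow : x ∉ Prod.fst '' (T' ∩ {p | p.2 ≤ m}) := by
    rintro ⟨⟨_, u⟩, ⟨hu, hum⟩, rfl⟩
    rcases lt_trichotomy u a with hua | rfl | hau
    · exact h.notMem_of_lt_of_lt (hsub.2 hu) hbE hua hab haE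
    · exact disjoint_left.1 hdisj ha hu
    · exact h.notMem_of_lt_of_lt haE hbE hau (lt_of_le_of_lt hum hmb) (hsub.2 hu)
  have hhigh : x ∉ Prod.fst '' (T ∩ {p | m ≤ p.2}) := by
    rintro ⟨⟨_, u⟩, ⟨hu, hmu⟩, rfl⟩
    rcases lt_trichotomy u b with hub | rfl | hbu
    · exact h.notMem_of_lt_of_lt haE hbE (ham.trans_le hmu) hub (hsub.1 hu)
    · exact disjoint_left.1 hdisj hu hb
    · exact h.notMem_of_lt_of_lt haE (hsub.1 hu) hab hbu hbE
  filter_upwards [(h.isOpen_diff.preimage (Continuous.prodMk_left m)).mem_nhds hm,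
    (hproj (hT'.inter (isClosed_le continuous_snd continuous_const))
      (inter_subset_left.trans hsub.2)).isOpen_compl.mem_nhds hlow,
    (hproj (hT.inter (isClosed_le continuous_const continuous_snd))
      (inter_subset_left.trans hsub.1)).isOpen_compl.mem_nhds hhigh] with y hy hylow hyhigh
  obtain ⟨a', ha', ha'm⟩ := h.exists_mem_le hy.1
  obtain ⟨b', hb', hmb'⟩ := h.exists_mem_ge hy.1
  have ha'T : (y, a') ∈ T := (hTE.symm ▸ ha' : (y, a') ∈ T ∪ T').resolve_right
    fun hmem => hylow ⟨_, ⟨hmem, ha'm⟩, rfl⟩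
  have hb'T : (y, b') ∈ T' := (hTE.symm ▸ hb' : (y, b') ∈ T ∪ T').resolve_left
    fun hmem => hyhigh ⟨_, ⟨hmem, hmb'⟩, rfl⟩
  refine ⟨a', b', (ha'm.trans hmb').lt_of_ne ?_, ha'T, hb'T⟩
  rintro rfl
  exact disjoint_left.1 hdisj ha'T hb'T

/-- The fibres with lower end in `T` and upper end in `T'` form a clopen set, and the reflection
`(x, u) ↦ (σ x, -u)` exchanges lower and upper ends. -/
theorem not_lt_of_mem_of_mem [PreconnectedSpace X] (h : IsBand B E) {σ : X → X}
    (hT : IsClosed T) (hT' : IsClosed T') (hdisj : Disjoint T T') (hTE : T ∪ T' = E)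
    (hσT : ∀ x u, (σ x, u) ∈ T → (x, -u) ∈ T) (hσT' : ∀ x u, (σ x, u) ∈ T' → (x, -u) ∈ T')
    {x : X} {a b : ℝ} (ha : (x, a) ∈ T) (hb : (x, b) ∈ T') : ¬ a < b := by
  intro hab
  have hsub : T ⊆ E ∧ T' ⊆ E := by simp [← hTE]
  have huniv : {x | ∃ a b, a < b ∧ (x, a) ∈ T ∧ (x, b) ∈ T'} = univ :=
    IsClopen.eq_univ ⟨h.isClosed_setOf_lt_mem hT hT' hdisj hTE,
      h.isOpen_setOf_lt_mem hT hT' hdisj hTE⟩ ⟨x, a, b, hab, ha, hb⟩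
  obtain ⟨b', a', hba', hb', ha'⟩ : ∃ b' a', b' < a' ∧ (x, b') ∈ T' ∧ (x, a') ∈ T := by
    obtain ⟨c, d, hcd, hc, hd⟩ := huniv.symm ▸ mem_univ (σ x)
    exact ⟨-d, -c, neg_lt_neg hcd, hσT' _ _ hd, hσT _ _ hc⟩
  rcases lt_trichotomy b' a with hlt | rfl | hlt
  · exact h.notMem_of_lt_of_lt (hsub.2 hb') (hsub.2 hb) hlt hab (hsub.1 ha)
  · exact disjoint_left.1 hdisj ha hb'
  · exact h.notMem_of_lt_of_lt (hsub.1 ha) (hsub.1 ha') hlt hba' (hsub.2 hb')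

theorem notMem_of_mem [PreconnectedSpace X] (h : IsBand B E) {σ : X → X}
    (hT : IsClosed T) (hT' : IsClosed T') (hdisj : Disjoint T T') (hTE : T ∪ T' = E)
    (hσT : ∀ x u, (σ x, u) ∈ T → (x, -u) ∈ T) (hσT' : ∀ x u, (σ x, u) ∈ T' → (x, -u) ∈ T')
    {x : X} {a b : ℝ} (ha : (x, a) ∈ T) : (x, b) ∉ T' := by
  intro hb
  rcases lt_trichotomy a b with hab | rfl | hba
  · exact h.not_lt_of_mem_of_mem hT hT' hdisj hTE hσT hσT' ha hb hab
  · exact disjoint_left.1 hdisj ha hb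
  · exact h.not_lt_of_mem_of_mem hT' hT hdisj.symm (union_comm T T' ▸ hTE) hσT' hσT hb ha hba

theorem isClosed_image_fibres (h : IsBand B E) {Y : Type*} [TopologicalSpace Y] [T2Space Y]
    {ψ : X × ℝ → Y} (hψ : Continuous ψ) (hT : IsClosed T) (hTE : T ⊆ E) :
    IsClosed (ψ '' (B ∩ Prod.fst ⁻¹' (Prod.fst '' T))) := by
  have hproj : IsCompact (Prod.fst '' T) :=
    (h.isCompact.of_isClosed_subset hT (hTE.trans h.subset)).image continuous_fst
  exact ((h.isCompact.inter_right (hproj.isClosed.preimage continuous_fst)).image hψ).isClosed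

/-- The images of the fibres through `T` and of those through `T'` cover `C`, so they meet. -/
theorem exists_map_eq_map_of_union_eq {Y : Type*} [TopologicalSpace Y] [T2Space Y] {ψ : X × ℝ → Y}
    {C : Set Y} (h : IsBand (ψ ⁻¹' C) E) (hψ : Continuous ψ) (hC : IsPreconnected C)
    (hCψ : C ⊆ range ψ) (hT : IsClosed T) (hT' : IsClosed T') (hTE : T ∪ T' = E)
    (hne : T.Nonempty) (hne' : T'.Nonempty) :
    ∃ p q, ψ p = ψ q ∧ (∃ a, (p.1, a) ∈ T) ∧ ∃ b, (q.1, b) ∈ T' := by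
  let D (s : Set (X × ℝ)) : Set Y := ψ '' (ψ ⁻¹' C ∩ Prod.fst ⁻¹' (Prod.fst '' s))
  have hcover : C ⊆ D T ∪ D T' := by
    intro y hy
    obtain ⟨⟨x, w⟩, rfl⟩ := hCψ hy
    obtain ⟨a, ha, -⟩ := h.exists_mem_le (x := x) (w := w) hy
    rw [← hTE] at ha
    exact ha.imp (fun ha => ⟨(x, w), ⟨hy, (x, a), ha, rfl⟩, rfl⟩)
      fun ha => ⟨(x, w), ⟨hy, (x, a), ha, rfl⟩, rfl⟩
  have hmeet {s : Set (X × ℝ)} (hs : s ⊆ E) (hne : s.Nonempty) : (C ∩ D s).Nonempty := by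
    obtain ⟨p, hp⟩ := hne
    exact ⟨ψ p, h.subset (hs hp), p, ⟨h.subset (hs hp), p, hp, rfl⟩, rfl⟩
  have hsub : T ⊆ E ∧ T' ⊆ E := by simp [← hTE]
  obtain ⟨_, -, ⟨p, ⟨-, ⟨_, a⟩, ha, rfl⟩, rfl⟩, q, ⟨-, ⟨_, b⟩, hb, rfl⟩, hqp⟩ :=
    isPreconnected_closed_iff.1 hC _ _ (h.isClosed_image_fibres hψ hT hsub.1)
      (h.isClosed_image_fibres hψ hT' hsub.2) hcover (hmeet hsub.1 hne) (hmeet hsub.2 hne')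
  exact ⟨p, q, hqp.symm, ⟨a, ha⟩, b, hb⟩

theorem isPreconnected_of_preimage [PreconnectedSpace X] {Y : Type*} [TopologicalSpace Y]
    [T2Space Y] {ψ : X × ℝ → Y} {C K : Set Y} (h : IsBand (ψ ⁻¹' C) (ψ ⁻¹' K)) {σ : X → X}
    (hψ : Continuous ψ) (hψσ : ∀ x u, ψ (σ x, u) = ψ (x, -u))
    (hfib : ∀ p q, ψ p = ψ q → q.1 = p.1 ∨ q.1 = σ p.1)
    (hC : IsPreconnected C) (hCψ : C ⊆ range ψ) (hKC : K ⊆ C) : IsPreconnected K := by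
  rw [isPreconnected_closed_iff]
  intro t t' ht ht' hcover ⟨y, hyK, hyt⟩ ⟨y', hyK', hyt'⟩
  by_contra hempty
  have hTE : (ψ ⁻¹' K ∩ ψ ⁻¹' t) ∪ (ψ ⁻¹' K ∩ ψ ⁻¹' t') = ψ ⁻¹' K := by
    rw [← inter_union_distrib_left, ← preimage_union]
    exact inter_eq_left.2 (preimage_mono hcover)
  have hdisj : Disjoint (ψ ⁻¹' K ∩ ψ ⁻¹' t) (ψ ⁻¹' K ∩ ψ ⁻¹' t') :=
    disjoint_left.2 fun p hp hp' => hempty ⟨ψ p, hp.1, hp.2, hp'.2⟩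
  have hclosed {s : Set Y} (hs : IsClosed s) : IsClosed (ψ ⁻¹' K ∩ ψ ⁻¹' s) :=
    h.isClosed.inter (hs.preimage hψ)
  have hne {s : Set Y} {y : Y} (hyK : y ∈ K) (hys : y ∈ s) :
      (ψ ⁻¹' K ∩ ψ ⁻¹' s).Nonempty := by
    obtain ⟨p, rfl⟩ := hCψ (hKC hyK)
    exact ⟨p, hyK, hys⟩
  have hinv (s : Set Y) (x : X) (u : ℝ) (hxu : (σ x, u) ∈ ψ ⁻¹' K ∩ ψ ⁻¹' s) :
      (x, -u) ∈ ψ ⁻¹' K ∩ ψ ⁻¹' s := by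
    simpa only [mem_inter_iff, mem_preimage, hψσ] using hxu
  obtain ⟨⟨x, u⟩, ⟨x', u'⟩, heq, ⟨a, ha⟩, b, hb⟩ := h.exists_map_eq_map_of_union_eq hψ hC hCψ
    (hclosed ht) (hclosed ht') hTE (hne hyK hyt) (hne hyK' hyt')
  obtain ⟨b', hb'⟩ : ∃ b', (x, b') ∈ ψ ⁻¹' K ∩ ψ ⁻¹' t' := by
    rcases hfib _ _ heq with rfl | rfl
    exacts [⟨b, hb⟩, ⟨-b, hinv t' x b hb⟩]
  exact h.notMem_of_mem (hclosed ht) (hclosed ht') hdisj hTE (hinv t) (hinv t') ha hb'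

end IsBand

end Band

section Quartic

open Polynomial

/-- The second divided differences of `q` are its leading coefficient, which is negative. -/
theorem eval_pos_of_natDegree_le_two {q : ℝ[X]} (hq : q.natDegree ≤ 2) {r a u b s : ℝ}
    (hra : r < a) (hau : a < u) (hub : u < b) (hbs : b < s) (hr : q.eval r < 0)
    (ha : 0 ≤ q.eval a) (hb : 0 ≤ q.eval b) (hs : q.eval s < 0) : 0 < q.eval u := by
  have heval (x : ℝ) : q.eval x = q.coeff 0 + q.coeff 1 * x + q.coeff 2 * x ^ 2 := by
    rw [eval_eq_sum_range' (Nat.lt_succ_of_le hq)]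
    simp [Finset.sum_range_succ]
  have hras : q.eval r * (s - a) + q.eval s * (a - r) - q.eval a * (s - r) =
      q.coeff 2 * ((a - r) * (s - a) * (s - r)) := by
    simp only [heval]; ring
  have haub : q.eval u * (b - a) = q.eval a * (b - u) + q.eval b * (u - a) -
      q.coeff 2 * ((b - a) * (u - a) * (b - u)) := by
    simp only [heval]; ring
  have ha' : 0 < a - r := sub_pos.2 hra
  have hs' : 0 < s - a := sub_pos.2 (hau.trans (hub.trans hbs))
  have hu' : 0 < u - a := sub_pos.2 hau
  have hb' : 0 < b - u := sub_pos.2 hub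
  have hlead : q.coeff 2 < 0 := by
    have hpos : 0 < (a - r) * (s - a) * (s - r) := by
      rw [← sub_add_sub_cancel s a r]; positivity
    refine neg_of_mul_neg_left (hras ▸ ?_) hpos.le
    linarith [mul_neg_of_neg_of_pos hr hs', mul_neg_of_neg_of_pos hs ha',
      mul_nonneg ha (add_pos hs' ha').le]
  have hba : 0 < b - a := by linarith
  refine pos_of_mul_pos_left (haub ▸ ?_) hba.le
  linarith [mul_nonneg ha hb'.le, mul_nonneg hb hu'.le,
    mul_neg_of_neg_of_pos hlead (mul_pos (mul_pos hba hu') hb')]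

theorem eval_neg_of_natDegree_le_four {P : ℝ[X]} (hP : P.natDegree ≤ 4) {l r a u b s m : ℝ}
    (hlr : l < r) (hra : r < a) (hau : a < u) (hub : u < b) (hbs : b < s) (hsm : s < m)
    (hl : P.eval l ≤ 0) (hr : 0 < P.eval r) (ha : P.eval a ≤ 0) (hb : P.eval b ≤ 0)
    (hs : 0 < P.eval s) (hm : P.eval m ≤ 0) : P.eval u < 0 := by
  obtain ⟨α, hα, hPα⟩ := intermediate_value_Icc hlr.le P.continuous.continuousOn ⟨hl, hr.le⟩
  obtain ⟨β, hβ, hPβ⟩ := intermediate_value_Icc' hsm.le P.continuous.continuousOn ⟨hm, hs.le⟩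
  have hαr : α < r := hα.2.lt_of_ne (by rintro rfl; exact hr.ne' hPα)
  have hsβ : s < β := hβ.1.lt_of_ne (by rintro rfl; exact hs.ne' hPβ)
  have hαβ : α < β := by linarith
  obtain ⟨q, hq⟩ : (X - C α) * (X - C β) ∣ P :=
    (isCoprime_X_sub_C_of_isUnit_sub (sub_ne_zero.2 hαβ.ne).isUnit).mul_dvd
      (dvd_iff_isRoot.2 hPα) (dvd_iff_isRoot.2 hPβ)
  have hdeg : q.natDegree ≤ 2 := by
    have hq0 : q ≠ 0 := by rintro rfl; simp [hq] at hr
    rw [hq, natDegree_mul (mul_ne_zero (X_sub_C_ne_zero α) (X_sub_C_ne_zero β)) hq0,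
      natDegree_mul (X_sub_C_ne_zero α) (X_sub_C_ne_zero β), natDegree_X_sub_C,
      natDegree_X_sub_C] at hP
    omega
  have heval (x : ℝ) : P.eval x = -((x - α) * (β - x)) * q.eval x := by
    rw [hq]; simp only [eval_mul, eval_sub, eval_X, eval_C]; ring
  have hcoef {x : ℝ} (hrx : r ≤ x) (hxs : x ≤ s) : -((x - α) * (β - x)) < 0 :=
    neg_neg_of_pos (mul_pos (by linarith) (by linarith))
  rw [heval] at hr ha hb hs ⊢
  exact mul_neg_of_neg_of_pos (hcoef (by linarith) (by linarith))
    (eval_pos_of_natDegree_le_two hdeg hra hau hub hbs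
      (neg_of_mul_pos_right hr (hcoef le_rfl (by linarith)).le)
      (nonneg_of_mul_nonpos_right ha (hcoef hra.le (by linarith)))
      (nonneg_of_mul_nonpos_right hb (hcoef (by linarith) hbs.le))
      (neg_of_mul_pos_right hs (hcoef (by linarith) le_rfl).le))

end Quartic

section PencilOfLines

variable {n : ℕ} {φ : (Fin n → ℝ) →L[ℝ] ℝ} {z : Fin n → ℝ}

theorem add_smul_ne_zero_of_mem_ker (hφ : φ z = 1) (d : Metric.sphere (0 : φ.ker) 1) (u : ℝ) :
    (d : Fin n → ℝ) + u • z ≠ 0 := by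
  intro h
  have hu : u = 0 := by simpa [hφ] using congrArg φ h
  refine ne_zero_of_mem_unit_sphere d (Subtype.ext ?_)
  simpa [hu] using h

theorem add_smul_ne_zero_of_apply_eq_one (hφ : φ z = 1) (d : φ.ker) (t : ℝ) :
    z + t • (d : Fin n → ℝ) ≠ 0 := fun h => by
  simpa [hφ] using congrArg φ h

/-- The pencil of lines through the point `[z]`: the line with direction `d` is parametrized by
`u ↦ [d + u z]`, so that `[z]` is its point at infinity. -/
def pencilMap (hφ : φ z = 1) (p : Metric.sphere (0 : φ.ker) 1 × ℝ) : RP n :=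
  RP.mk ⟨p.1 + p.2 • z, add_smul_ne_zero_of_mem_ker hφ p.1 p.2⟩

theorem continuous_pencilMap (hφ : φ z = 1) : Continuous (pencilMap hφ) :=
  RP.isOpenQuotientMap_mk.continuous.comp (by fun_prop)

theorem pencilMap_neg_left (hφ : φ z = 1) (d : Metric.sphere (0 : φ.ker) 1) (u : ℝ) :
    pencilMap hφ (-d, u) = pencilMap hφ (d, -u) :=
  RP.mk_eq_mk.2 ⟨-1, by norm_num, by simp⟩

theorem fst_eq_or_eq_neg_of_pencilMap_eq (hφ : φ z = 1)
    (p q : Metric.sphere (0 : φ.ker) 1 × ℝ) (h : pencilMap hφ p = pencilMap hφ q) :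
    q.1 = p.1 ∨ q.1 = -p.1 := by
  obtain ⟨c, -, hc⟩ := RP.mk_eq_mk.1 h
  have hu : c * p.2 = q.2 := by simpa [hφ] using congrArg φ hc
  have hd : c • (p.1 : Fin n → ℝ) = q.1 := by
    simpa [smul_add, smul_smul, hu] using hc
  have hnorm : |c| = 1 := by
    simpa [norm_smul] using congrArg norm (Subtype.ext hd : c • (p.1 : φ.ker) = q.1)
  rcases (abs_eq zero_le_one).1 hnorm with rfl | rfl
  · exact .inl (Subtype.ext (Subtype.ext (hd.symm.trans (one_smul ℝ _))))
  · exact .inr (Subtype.ext (Subtype.ext (hd.symm.trans (neg_one_smul ℝ _))))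

theorem mem_range_pencilMap (hφ : φ z = 1) {hz : z ≠ 0} {y : RP n} (hy : y ≠ RP.mk ⟨z, hz⟩) :
    y ∈ range (pencilMap hφ) := by
  obtain ⟨v, rfl⟩ := RP.mk_surjective y
  let d : φ.ker := ⟨v.1 - φ v.1 • z, by simp [hφ]⟩
  have hd : d ≠ 0 := by
    intro hd
    have hv : φ v.1 • z = v.1 := (sub_eq_zero.1 (congrArg Subtype.val hd)).symm
    refine hy (RP.mk_eq_mk.2 ⟨φ v.1, fun h => v.2 ?_, hv⟩).symm
    rw [← hv, h, zero_smul]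
  have hnorm : ‖d‖ ≠ 0 := norm_ne_zero_iff.2 hd
  refine ⟨(⟨‖d‖⁻¹ • d, mem_sphere_zero_iff_norm.2 (norm_smul_inv_norm hd)⟩, ‖d‖⁻¹ * φ v.1),
    RP.mk_eq_mk.2 ⟨‖d‖, hnorm, ?_⟩⟩
  change ‖d‖ • (‖d‖⁻¹ • (v.1 - φ v.1 • z) + (‖d‖⁻¹ * φ v.1) • z) = v.1
  rw [smul_add, smul_inv_smul₀ hnorm, smul_smul, mul_inv_cancel_left₀ hnorm, sub_add_cancel]

theorem preconnectedSpace_sphere_ker (hn : 3 ≤ n) (hφ : φ z = 1) :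
    PreconnectedSpace (Metric.sphere (0 : φ.ker) 1) := by
  have hφ0 : (φ : (Fin n → ℝ) →ₗ[ℝ] ℝ) ≠ 0 := fun h => by
    simpa [hφ] using LinearMap.congr_fun h z
  have hrank := Module.Dual.finrank_ker_add_one_of_ne_zero hφ0
  rw [Module.finrank_fin_fun] at hrank
  refine Subtype.preconnectedSpace (isPreconnected_sphere ?_ 0 1)
  rw [← Module.finrank_eq_rank]
  exact_mod_cast show 1 < Module.finrank ℝ φ.ker by omega

/-- Away from a neighbourhood of its point at infinity `[z]`, each line of the pencil is
bounded, uniformly in the line. -/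
theorem isCompact_pencilMap_preimage (hφ : φ z = 1) {hz : z ≠ 0} {C : Set (RP n)}
    (hC : IsClosed C) (hzC : RP.mk ⟨z, hz⟩ ∉ C) : IsCompact (pencilMap hφ ⁻¹' C) := by
  let atInfinity (p : Metric.sphere (0 : φ.ker) 1 × ℝ) : RP n :=
    RP.mk ⟨z + p.2 • (p.1 : Fin n → ℝ), add_smul_ne_zero_of_apply_eq_one hφ p.1 p.2⟩
  have hcont : Continuous atInfinity := RP.isOpenQuotientMap_mk.continuous.comp (by fun_prop)
  have hclosed : IsClosed (Prod.snd '' (atInfinity ⁻¹' C)) :=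
    isClosedMap_snd_of_compactSpace _ (hC.preimage hcont)
  have hzero : (0 : ℝ) ∉ Prod.snd '' (atInfinity ⁻¹' C) := by
    rintro ⟨⟨d, _⟩, hd, rfl⟩
    exact hzC (by simpa [atInfinity] using hd)
  obtain ⟨ε, hε, hball⟩ := Metric.isOpen_iff.1 hclosed.isOpen_compl 0 hzero
  refine (isCompact_univ.prod (isCompact_closedBall (0 : ℝ) ε⁻¹)).of_isClosed_subset
    (hC.preimage (continuous_pencilMap hφ)) fun ⟨d, u⟩ hdu => ⟨mem_univ _, ?_⟩
  rw [mem_closedBall_zero_iff, Real.norm_eq_abs]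
  rcases eq_or_ne u 0 with rfl | hu
  · simpa using hε.le
  · by_contra! hlt
    have hinv : u⁻¹ ∈ Metric.ball (0 : ℝ) ε := by
      simpa [abs_inv] using inv_lt_of_inv_lt₀ hε hlt
    refine hball hinv ⟨(d, u⁻¹), ?_, rfl⟩
    have heq : atInfinity (d, u⁻¹) = pencilMap hφ (d, u) :=
      RP.mk_eq_mk.2 ⟨u, hu, by simp [smul_add, smul_smul, hu, add_comm]⟩
    rwa [mem_preimage, heq]

end PencilOfLines

section ConnectedComponents

variable {X : Type*} [TopologicalSpace X] {S Z : Set X}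

theorem connectedComponents_coe_eq_coe_iff {x y : S} :
    (x : ConnectedComponents S) = y ↔ (y : X) ∈ connectedComponentIn S x := by
  rw [eq_comm, ConnectedComponents.coe_eq_coe', connectedComponentIn_eq_image x.2,
    Subtype.val_injective.mem_set_image]

theorem isClosed_connectedComponentIn (hS : IsClosed S) (x : X) :
    IsClosed (connectedComponentIn S x) := by
  by_cases hx : x ∈ S
  · rw [connectedComponentIn_eq_image hx]
    exact hS.isClosedEmbedding_subtypeVal.isClosedMap _ isClosed_connectedComponent
  · rw [connectedComponentIn_eq_empty hx]
    exact isClosed_empty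

theorem isOpen_connectedComponentIn_inter [LocallyConnectedSpace X] {U : Set X} (hU : IsOpen U)
    (hUS : U ⊆ S) (x : X) : IsOpen (connectedComponentIn S x ∩ U) := by
  rw [isOpen_iff_mem_nhds]
  rintro y ⟨hy, hyU⟩
  filter_upwards [hU.connectedComponentIn.mem_nhds (mem_connectedComponentIn hyU)] with w hw
  exact ⟨connectedComponentIn_eq hy ▸ connectedComponentIn_mono y hUS hw,
    connectedComponentIn_subset U y hw⟩

theorem nonempty_connectedComponents_equiv (hZS : Z ⊆ S)
    (hne : ∀ x ∈ S, (connectedComponentIn S x ∩ Z).Nonempty)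
    (hconn : ∀ x ∈ S, IsPreconnected (connectedComponentIn S x ∩ Z)) :
    Nonempty (ConnectedComponents S ≃ ConnectedComponents Z) := by
  refine ⟨(Equiv.ofBijective (continuous_inclusion hZS).connectedComponentsMap ⟨?_, ?_⟩).symm⟩
  · intro a b hab
    obtain ⟨x, rfl⟩ := ConnectedComponents.surjective_coe a
    obtain ⟨y, rfl⟩ := ConnectedComponents.surjective_coe b
    have hy : (y : X) ∈ connectedComponentIn S x := connectedComponents_coe_eq_coe_iff.1 hab
    exact connectedComponents_coe_eq_coe_iff.2 <|
      (hconn x (hZS x.2)).subset_connectedComponentIn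
        ⟨mem_connectedComponentIn (hZS x.2), x.2⟩ inter_subset_right ⟨hy, y.2⟩
  · intro c
    obtain ⟨x, rfl⟩ := ConnectedComponents.surjective_coe c
    obtain ⟨y, hyS, hyZ⟩ := hne x x.2
    exact ⟨((⟨y, hyZ⟩ : Z) : ConnectedComponents Z),
      (connectedComponents_coe_eq_coe_iff.2 hyS).symm⟩

end ConnectedComponents

section Quartic

open MvPolynomial

theorem eval_smul_of_isHomogeneous {σ R : Type*} [CommSemiring R] {k : ℕ} {F : MvPolynomial σ R}
    (hF : F.IsHomogeneous k) (c : R) (v : σ → R) : eval (c • v) F = c ^ k * eval v F := by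
  simp only [eval_eq, Finset.mul_sum, Pi.smul_apply, smul_eq_mul, mul_pow, Finset.prod_mul_distrib]
  refine Finset.sum_congr rfl fun d hd => ?_
  rw [Finset.prod_pow_eq_pow_sum, ← hF (mem_support_iff.1 hd), Finsupp.weight_apply]
  simp [Finsupp.sum]
  ring

variable {n k : ℕ} {F : MvPolynomial (Fin n) ℝ}

/-- The projective hypersurface with equation `F` is smooth at each of its real points. -/
def IsSmoothAtRealPoints (F : MvPolynomial (Fin n) ℝ) : Prop :=
  ∀ v, v ≠ 0 → eval v F = 0 → fderiv ℝ (fun v => eval v F) v ≠ 0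

/-- The points of projective space at which the form `F` is nonpositive. -/
def nonposLocus (F : MvPolynomial (Fin n) ℝ) : Set (RP n) := RP.locus {v | eval v F ≤ 0}

/-- The real points of the projective hypersurface with equation `F`. -/
def vanishingLocus (F : MvPolynomial (Fin n) ℝ) : Set (RP n) := RP.locus {v | eval v F = 0}

theorem isScaleInvariant_eval (hF : F.IsHomogeneous k) (hk : Even k) {p : ℝ → Prop}
    (hp : ∀ c : ℝ, 0 < c → ∀ x, p x → p (c * x)) : RP.IsScaleInvariant {v | p (eval v F)} := by
  intro c hc v hv
  rw [mem_ofPred_eq, eval_smul_of_isHomogeneous hF]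
  exact hp _ (hk.pow_pos hc) _ hv

theorem mk_mem_nonposLocus (hF : F.IsHomogeneous k) (hk : Even k) {v : {v : Fin n → ℝ // v ≠ 0}} :
    RP.mk v ∈ nonposLocus F ↔ eval v.1 F ≤ 0 :=
  (isScaleInvariant_eval hF hk (p := (· ≤ 0)) fun _ hc _ hx =>
    mul_nonpos_of_nonneg_of_nonpos hc.le hx).mk_mem_locus

theorem mk_mem_vanishingLocus (hF : F.IsHomogeneous k) (hk : Even k)
    {v : {v : Fin n → ℝ // v ≠ 0}} : RP.mk v ∈ vanishingLocus F ↔ eval v.1 F = 0 :=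
  (isScaleInvariant_eval hF hk (p := (· = 0)) fun _ _ _ hx => by simp [hx]).mk_mem_locus

end Quartic

section SmoothQuartic

open MvPolynomial

theorem exists_eventually_lt_of_fderiv_ne_zero {E : Type*} [NormedAddCommGroup E]
    [NormedSpace ℝ E] {f : E → ℝ} {v : E} (h : fderiv ℝ f v ≠ 0) :
    ∃ w, ∀ᶠ t in 𝓝[>] (0 : ℝ), f (v + t • w) < f v := by
  have hdiff : DifferentiableAt ℝ f v :=
    not_imp_comm.1 fderiv_zero_of_not_differentiableAt h
  obtain ⟨w, hw⟩ : ∃ w, fderiv ℝ f v w < 0 := by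
    by_contra! hnonneg
    refine h (ContinuousLinearMap.ext fun w => le_antisymm ?_ (hnonneg w))
    simpa using hnonneg (-w)
  refine ⟨w, ?_⟩
  filter_upwards [(hdiff.hasFDerivAt.hasLineDerivAt w).tendsto_slope_zero_right.eventually_lt_const
    hw, self_mem_nhdsWithin] with t hslope ht
  exact sub_neg.1 (neg_of_mul_neg_right hslope (inv_nonneg.2 (mem_Ioi.1 ht).le))

variable {n k : ℕ} {F : MvPolynomial (Fin n) ℝ} {φ : (Fin n → ℝ) →L[ℝ] ℝ}

theorem exists_neg_mem_connectedComponentIn_nonposLocus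
    (hsm : IsSmoothAtRealPoints F) {y : RP n} (hy : y ∈ nonposLocus F) :
    ∃ z : {v : Fin n → ℝ // v ≠ 0},
      eval z.1 F < 0 ∧ RP.mk z ∈ connectedComponentIn (nonposLocus F) y := by
  have hyS := hy
  obtain ⟨v, rfl, hv⟩ := hy
  rcases lt_or_eq_of_le (show eval v.1 F ≤ 0 from hv) with hneg | hzero
  · exact ⟨v, hneg, mem_connectedComponentIn hyS⟩
  obtain ⟨w, hw⟩ := exists_eventually_lt_of_fderiv_ne_zero (hsm v v.2 hzero)
  have hcont : Continuous fun t : ℝ => v.1 + t • w := by fun_prop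
  have hne : ∀ᶠ t in 𝓝[>] (0 : ℝ), v.1 + t • w ≠ 0 :=
    (hcont.continuousAt.eventually_ne (by simpa using v.2)).filter_mono nhdsWithin_le_nhds
  obtain ⟨ε, hε, hsub⟩ := mem_nhdsGT_iff_exists_Ioc_subset.1 (hw.and hne)
  have hnonpos (t : ℝ) (ht : t ∈ Icc 0 ε) : eval (v.1 + t • w) F ≤ 0 ∧ v.1 + t • w ≠ 0 := by
    rcases ht.1.eq_or_lt with rfl | hpos
    · simpa using ⟨hzero.le, v.2⟩
    · exact (hsub ⟨hpos, ht.2⟩).imp_left fun h => hzero ▸ h.le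
  have hε_mem : ε ∈ Ioc 0 ε := ⟨hε, le_rfl⟩
  refine ⟨⟨v.1 + ε • w, (hsub hε_mem).2⟩, hzero ▸ (hsub hε_mem).1, ?_⟩
  refine (RP.isPreconnected_locus (isPreconnected_Icc.image _ hcont.continuousOn)
    ?_).subset_connectedComponentIn ?_ ?_ ⟨_, rfl, ε, Ioc_subset_Icc_self hε_mem, rfl⟩
  · rintro ⟨t, ht, h0⟩
    exact (hnonpos t ht).2 h0
  · exact ⟨v, rfl, 0, ⟨le_rfl, hε.le⟩, by simp⟩
  · rintro _ ⟨u, rfl, t, ht, htu⟩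
    exact ⟨u, rfl, htu ▸ (hnonpos t ht).1⟩

theorem exists_natDegree_le_eval_add_smul (hF : F.IsHomogeneous k) (v w : Fin n → ℝ) :
    ∃ P : Polynomial ℝ, P.natDegree ≤ k ∧ ∀ u, P.eval u = eval (v + u • w) F := by
  refine ⟨aeval (fun i => Polynomial.C (v i) + Polynomial.X * Polynomial.C (w i)) F, ?_, ?_⟩
  · have hlin (i : Fin n) :
        (Polynomial.C (v i) + Polynomial.X * Polynomial.C (w i)).natDegree ≤ 1 := by
      compute_degree
    simpa using aeval_natDegree_le F hF.totalDegree_le _ hlin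
  · intro u
    rw [← Polynomial.coe_evalRingHom, map_aeval, eval, coe_eval₂Hom]
    refine congrArg₂ (fun f g => eval₂ f g F) (RingHom.ext fun x => by simp) (funext fun i => ?_)
    simp [mul_comm (w i)]

theorem eventually_atBot_eval_add_smul_neg (hF : F.IsHomogeneous k) (hk : Even k)
    {z : Fin n → ℝ} (hz : eval z F < 0) (v : Fin n → ℝ) :
    ∀ᶠ u : ℝ in atBot, eval (v + u • z) F < 0 := by
  have hlim : Tendsto (fun u : ℝ => eval (z + u⁻¹ • v) F) atBot (𝓝 (eval z F)) := by
    have hcont : Continuous fun t : ℝ => eval (z + t • v) F :=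
      (continuous_eval F).comp (by fun_prop)
    simpa [Function.comp_def] using (hcont.tendsto 0).comp tendsto_inv_atBot_zero
  filter_upwards [hlim.eventually_lt_const hz, eventually_lt_atBot 0] with u hneg hu
  have hscale : v + u • z = u • (z + u⁻¹ • v) := by
    rw [smul_add, smul_inv_smul₀ hu.ne, add_comm]
  rw [hscale, eval_smul_of_isHomogeneous hF]
  exact mul_neg_of_pos_of_neg (hk.pow_pos hu.ne) hneg

theorem isClosed_nonposLocus (hF : F.IsHomogeneous k) (hk : Even k) :
    IsClosed (nonposLocus F) :=
  (isScaleInvariant_eval hF hk (p := (· ≤ 0)) fun _ hc _ hx =>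
    mul_nonpos_of_nonneg_of_nonpos hc.le hx).isClosed_locus
      (isClosed_le (continuous_eval F) continuous_const)

theorem isClosed_vanishingLocus (hF : F.IsHomogeneous k) (hk : Even k) :
    IsClosed (vanishingLocus F) :=
  (isScaleInvariant_eval hF hk (p := (· = 0)) fun _ _ _ hx => by simp [hx]).isClosed_locus
    (isClosed_eq (continuous_eval F) continuous_const)

theorem vanishingLocus_subset_nonposLocus : vanishingLocus F ⊆ nonposLocus F :=
  fun _ ⟨v, hv, h⟩ => ⟨v, hv, le_of_eq h⟩

theorem isOpen_nonposLocus_sdiff_vanishingLocus (hF : F.IsHomogeneous k) (hk : Even k) :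
    IsOpen (nonposLocus F \ vanishingLocus F) := by
  have hinv := isScaleInvariant_eval hF hk (p := (0 ≤ ·)) fun _ hc _ hx => mul_nonneg hc.le hx
  have hcompl : nonposLocus F \ vanishingLocus F = (RP.locus {v | 0 ≤ eval v F})ᶜ := by
    ext y
    obtain ⟨v, rfl⟩ := RP.mk_surjective y
    rw [Set.mem_sdiff, mem_compl_iff, mk_mem_nonposLocus hF hk, mk_mem_vanishingLocus hF hk,
      hinv.mk_mem_locus, mem_ofPred_eq, not_le, lt_iff_le_and_ne]
  rw [hcompl]
  exact (hinv.isClosed_locus (isClosed_le continuous_const (continuous_eval F))).isOpen_compl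

theorem pencilMap_mem_nonposLocus (hF : F.IsHomogeneous k) (hk : Even k) {z : Fin n → ℝ}
    (hφ : φ z = 1) {d : Metric.sphere (0 : φ.ker) 1} {u : ℝ} :
    pencilMap hφ (d, u) ∈ nonposLocus F ↔ eval ((d : Fin n → ℝ) + u • z) F ≤ 0 :=
  mk_mem_nonposLocus hF hk

theorem pencilMap_mem_vanishingLocus (hF : F.IsHomogeneous k) (hk : Even k) {z : Fin n → ℝ}
    (hφ : φ z = 1) {d : Metric.sphere (0 : φ.ker) 1} {u : ℝ} :
    pencilMap hφ (d, u) ∈ vanishingLocus F ↔ eval ((d : Fin n → ℝ) + u • z) F = 0 :=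
  mk_mem_vanishingLocus hF hk

theorem pencilMap_mem_connectedComponentIn_nonposLocus (hF : F.IsHomogeneous k) (hk : Even k)
    {z : Fin n → ℝ} (hφ : φ z = 1) {y : RP n} {d : Metric.sphere (0 : φ.ker) 1} {I : Set ℝ}
    (hI : IsPreconnected I) {a u : ℝ} (haI : a ∈ I) (huI : u ∈ I)
    (hnonpos : ∀ t ∈ I, eval ((d : Fin n → ℝ) + t • z) F ≤ 0)
    (ha : pencilMap hφ (d, a) ∈ connectedComponentIn (nonposLocus F) y) :
    pencilMap hφ (d, u) ∈ connectedComponentIn (nonposLocus F) y := by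
  have hcont : Continuous fun t => pencilMap hφ (d, t) :=
    (continuous_pencilMap hφ).comp (by fun_prop)
  rw [connectedComponentIn_eq ha]
  refine (hI.image _ hcont.continuousOn).subset_connectedComponentIn ⟨a, haI, rfl⟩ ?_
    ⟨u, huI, rfl⟩
  rintro _ ⟨t, ht, rfl⟩
  exact (pencilMap_mem_nonposLocus hF hk hφ).2 (hnonpos t ht)

theorem exists_lt_eval_pos_of_pencilMap_mem (hF : F.IsHomogeneous k) (hk : Even k)
    {z : Fin n → ℝ} (hφ : φ z = 1) (hz : eval z F < 0) {y : RP n}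
    (hcompact : IsCompact (pencilMap hφ ⁻¹' connectedComponentIn (nonposLocus F) y))
    {d : Metric.sphere (0 : φ.ker) 1} {a : ℝ}
    (ha : pencilMap hφ (d, a) ∈ connectedComponentIn (nonposLocus F) y) :
    ∃ l r, l < r ∧ r < a ∧ eval ((d : Fin n → ℝ) + l • z) F ≤ 0 ∧
      0 < eval ((d : Fin n → ℝ) + r • z) F := by
  obtain ⟨r, hra, hr⟩ : ∃ r ≤ a, 0 < eval ((d : Fin n → ℝ) + r • z) F := by
    by_contra! hnonpos
    refine not_bddBelow_Iic a ((hcompact.image continuous_snd).bddBelow.mono fun u hu => ?_)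
    refine ⟨(d, u), ?_, rfl⟩
    exact pencilMap_mem_connectedComponentIn_nonposLocus hF hk hφ isPreconnected_Iic
      self_mem_Iic hu hnonpos ha
  have ha' : eval ((d : Fin n → ℝ) + a • z) F ≤ 0 :=
    (pencilMap_mem_nonposLocus hF hk hφ).1 (connectedComponentIn_subset _ _ ha)
  obtain ⟨l, hl, hlr⟩ := ((eventually_atBot_eval_add_smul_neg hF hk hz d).and
    (eventually_lt_atBot r)).exists
  exact ⟨l, r, hlr, hra.lt_of_ne (by rintro rfl; exact hr.not_ge ha'), hl.le, hr⟩

theorem exists_gt_eval_pos_of_pencilMap_mem (hF : F.IsHomogeneous k) (hk : Even k)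
    {z : Fin n → ℝ} (hφ : φ z = 1) (hz : eval z F < 0) {y : RP n}
    (hcompact : IsCompact (pencilMap hφ ⁻¹' connectedComponentIn (nonposLocus F) y))
    {d : Metric.sphere (0 : φ.ker) 1} {b : ℝ}
    (hb : pencilMap hφ (d, b) ∈ connectedComponentIn (nonposLocus F) y) :
    ∃ s m, b < s ∧ s < m ∧ 0 < eval ((d : Fin n → ℝ) + s • z) F ∧
      eval ((d : Fin n → ℝ) + m • z) F ≤ 0 := by
  have hneg (u : ℝ) : eval (((-d : Metric.sphere (0 : φ.ker) 1) : Fin n → ℝ) + u • z) F =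
      eval ((d : Fin n → ℝ) + (-u) • z) F := by
    have h := eval_smul_of_isHomogeneous hF (-1) ((d : Fin n → ℝ) + (-u) • z)
    rw [hk.neg_one_pow, one_mul] at h
    simpa using h
  obtain ⟨l, r, hlr, hra, hl, hr⟩ := exists_lt_eval_pos_of_pencilMap_mem hF hk hφ hz hcompact
    (d := -d) (a := -b) (by rwa [pencilMap_neg_left, neg_neg])
  exact ⟨-r, -l, lt_neg.1 hra, neg_lt_neg hlr, hneg r ▸ hr, hneg l ▸ hl⟩

/-- The restriction of `F` to the line has at most four roots, and it has one in each of
`[l, r]`, `(r, a]`, `[b, s)` and `[s, m]`. -/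
theorem eval_neg_of_pencilMap_mem (hF : F.IsHomogeneous 4) {z : Fin n → ℝ} (hφ : φ z = 1)
    (hz : eval z F < 0) {y : RP n}
    (hcompact : IsCompact (pencilMap hφ ⁻¹' connectedComponentIn (nonposLocus F) y))
    {d : Metric.sphere (0 : φ.ker) 1} {a u b : ℝ} (hau : a < u) (hub : u < b)
    (ha : pencilMap hφ (d, a) ∈ connectedComponentIn (nonposLocus F) y)
    (hb : pencilMap hφ (d, b) ∈ connectedComponentIn (nonposLocus F) y) :
    eval ((d : Fin n → ℝ) + u • z) F < 0 := by
  have h4 : Even 4 := by decide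
  obtain ⟨l, r, hlr, hra, hl, hr⟩ :=
    exists_lt_eval_pos_of_pencilMap_mem hF h4 hφ hz hcompact ha
  obtain ⟨s, m, hbs, hsm, hs, hm⟩ :=
    exists_gt_eval_pos_of_pencilMap_mem hF h4 hφ hz hcompact hb
  have ha' : eval ((d : Fin n → ℝ) + a • z) F ≤ 0 :=
    (pencilMap_mem_nonposLocus hF h4 hφ).1 (connectedComponentIn_subset _ _ ha)
  have hb' : eval ((d : Fin n → ℝ) + b • z) F ≤ 0 :=
    (pencilMap_mem_nonposLocus hF h4 hφ).1 (connectedComponentIn_subset _ _ hb)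
  obtain ⟨P, hdeg, hP⟩ := exists_natDegree_le_eval_add_smul hF (d : Fin n → ℝ) z
  rw [← hP] at hl hr ha' hb' hs hm ⊢
  exact eval_neg_of_natDegree_le_four hdeg hlr hra hau hub hbs hsm hl hr ha' hb' hs hm

theorem isBand_pencilMap_preimage (hF : F.IsHomogeneous 4) {z : {v : Fin n → ℝ // v ≠ 0}}
    (hφ : φ z.1 = 1) (hz : eval z.1 F < 0) {y : RP n}
    (hzy : RP.mk z ∉ connectedComponentIn (nonposLocus F) y) :
    IsBand (pencilMap hφ ⁻¹' connectedComponentIn (nonposLocus F) y)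
      (pencilMap hφ ⁻¹' (connectedComponentIn (nonposLocus F) y ∩ vanishingLocus F)) := by
  have h4 : Even 4 := by decide
  have hS := isClosed_nonposLocus hF h4
  have hC := isClosed_connectedComponentIn hS y
  have hcompact := isCompact_pencilMap_preimage hφ hC hzy
  refine ⟨hcompact, (hC.inter (isClosed_vanishingLocus hF h4)).preimage (continuous_pencilMap hφ),
    preimage_mono inter_subset_left, ?_, ?_⟩
  · rw [← preimage_sdiff, sdiff_self_inter,
      ← inter_eq_left.2 (connectedComponentIn_subset (nonposLocus F) y), inter_sdiff_assoc]
    exact (isOpen_connectedComponentIn_inter (isOpen_nonposLocus_sdiff_vanishingLocus hF h4)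
      sdiff_subset y).preimage (continuous_pencilMap hφ)
  · intro d a u b ha hb hau hub
    have hneg (t : ℝ) (hat : a < t) (htb : t < b) :=
      eval_neg_of_pencilMap_mem hF hφ hz hcompact hat htb ha hb
    have hnonpos (t : ℝ) (ht : t ∈ Ico a b) : eval ((d : Fin n → ℝ) + t • z.1) F ≤ 0 := by
      rcases ht.1.eq_or_lt with rfl | hat
      · exact (pencilMap_mem_nonposLocus hF h4 hφ).1 (connectedComponentIn_subset _ _ ha)
      · exact (hneg t hat ht.2).le
    refine ⟨pencilMap_mem_connectedComponentIn_nonposLocus hF h4 hφ isPreconnected_Ico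
      ⟨le_rfl, hau.trans hub⟩ ⟨hau.le, hub⟩ hnonpos ha, fun hu => ?_⟩
    exact (hneg u hau hub).ne ((pencilMap_mem_vanishingLocus hF h4 hφ).1 hu.2)

theorem inter_vanishingLocus_nonempty_and_isPreconnected (hn : 3 ≤ n) (hF : F.IsHomogeneous 4)
    {z : {v : Fin n → ℝ // v ≠ 0}} (hz : eval z.1 F < 0) {y : RP n} (hy : y ∈ nonposLocus F)
    (hzy : RP.mk z ∉ connectedComponentIn (nonposLocus F) y) :
    (connectedComponentIn (nonposLocus F) y ∩ vanishingLocus F).Nonempty ∧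
      IsPreconnected (connectedComponentIn (nonposLocus F) y ∩ vanishingLocus F) := by
  obtain ⟨φ, hφ⟩ := SeparatingDual.exists_eq_one (R := ℝ) z.2
  have := preconnectedSpace_sphere_ker hn hφ
  have hband := isBand_pencilMap_preimage hF hφ hz hzy
  have hrange : connectedComponentIn (nonposLocus F) y ⊆ range (pencilMap hφ) :=
    fun x hx => mem_range_pencilMap hφ (ne_of_mem_of_not_mem hx hzy)
  constructor
  · have hyC := mem_connectedComponentIn hy
    obtain ⟨⟨d, u⟩, rfl⟩ := hrange hyC
    obtain ⟨a, ha, -⟩ := hband.exists_mem_le hyC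
    exact ⟨_, ha⟩
  · exact hband.isPreconnected_of_preimage (continuous_pencilMap hφ) (pencilMap_neg_left hφ)
      (fst_eq_or_eq_neg_of_pencilMap_eq hφ) isPreconnected_connectedComponentIn hrange
      inter_subset_left

theorem nonempty_connectedComponents_nonposLocus_equiv_vanishingLocus (hn : 3 ≤ n)
    (hF : F.IsHomogeneous 4) (hsm : IsSmoothAtRealPoints F)
    (hdisc : ¬ IsPreconnected (nonposLocus F)) :
    Nonempty (ConnectedComponents (nonposLocus F) ≃ ConnectedComponents (vanishingLocus F)) := by
  have hcomp (y : RP n) : ∃ z : {v : Fin n → ℝ // v ≠ 0},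
      eval z.1 F < 0 ∧ RP.mk z ∉ connectedComponentIn (nonposLocus F) y := by
    obtain ⟨x, hx, hxy⟩ : ∃ x ∈ nonposLocus F, x ∉ connectedComponentIn (nonposLocus F) y := by
      by_contra! hsub
      exact hdisc ((connectedComponentIn_subset _ y).antisymm hsub ▸
        isPreconnected_connectedComponentIn)
    obtain ⟨z, hz, hzx⟩ := exists_neg_mem_connectedComponentIn_nonposLocus hsm hx
    refine ⟨z, hz, fun hzy => hxy ?_⟩
    rw [connectedComponentIn_eq hzy, ← connectedComponentIn_eq hzx]
    exact mem_connectedComponentIn hx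
  refine nonempty_connectedComponents_equiv vanishingLocus_subset_nonposLocus (fun y hy => ?_)
    fun y hy => ?_ <;> obtain ⟨z, hz, hzy⟩ := hcomp y
  exacts [(inter_vanishingLocus_nonempty_and_isPreconnected hn hF hz hy hzy).1,
    (inter_vanishingLocus_nonempty_and_isPreconnected hn hF hz hy hzy).2]

end SmoothQuartic

section CountingComponents

theorem nontrivial_connectedComponentIn_of_fderiv_ne_zero {E : Type*} [NormedAddCommGroup E]
    [NormedSpace ℝ E] {f : E → ℝ} {T : Set E} {x : E} (hx : x ∈ T) (hpos : ∀ y ∉ T, 0 < f y)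
    (hfx : f x ≤ 0) (hderiv : fderiv ℝ f x ≠ 0) : (connectedComponentIn T x).Nontrivial := by
  obtain ⟨w, hw⟩ := exists_eventually_lt_of_fderiv_ne_zero hderiv
  obtain ⟨ε, hε, hsub⟩ := mem_nhdsGT_iff_exists_Ioc_subset.1 hw
  have hcont : Continuous fun t : ℝ => x + t • w := by fun_prop
  have hε_mem : ε ∈ Ioc 0 ε := ⟨hε, le_rfl⟩
  refine ⟨x, mem_connectedComponentIn hx, x + ε • w, ?_, fun h => (hsub hε_mem).ne' (congrArg f h)⟩
  refine (isPreconnected_Icc.image _ hcont.continuousOn).subset_connectedComponentIn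
    ⟨0, ⟨le_rfl, hε.le⟩, by simp⟩ ?_ ⟨ε, Ioc_subset_Icc_self hε_mem, rfl⟩
  rintro _ ⟨t, ht, rfl⟩
  rcases ht.1.eq_or_lt with rfl | hpos_t
  · simpa using hx
  · by_contra hnot
    exact (hpos _ hnot).not_gt ((hsub ⟨hpos_t, ht.2⟩).trans_le hfx)

theorem exists_connectedComponentIn_eq_Icc {T : Set ℝ} (hT : IsCompact T) {x : ℝ} (hx : x ∈ T) :
    ∃ a b, a ≤ b ∧ connectedComponentIn T x = Icc a b ∧ a ∈ frontier T ∧ b ∈ frontier T := by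
  have hconn : IsConnected (connectedComponentIn T x) := isConnected_connectedComponentIn_iff.2 hx
  have hcompact : IsCompact (connectedComponentIn T x) :=
    hT.of_isClosed_subset (isClosed_connectedComponentIn hT.isClosed x)
      (connectedComponentIn_subset T x)
  have hIcc := eq_Icc_of_connected_compact hconn hcompact
  set a := sInf (connectedComponentIn T x)
  set b := sSup (connectedComponentIn T x)
  have hab : a ≤ b := nonempty_Icc.1 (hIcc ▸ hconn.nonempty)
  have hfrontier {c : ℝ} (hc : c ∈ Icc a b) (hcI : c ∉ Ioo a b) : c ∈ frontier T := by
    rw [← hIcc] at hc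
    refine hT.isClosed.frontier_eq ▸ ⟨connectedComponentIn_subset T x hc, fun hint => hcI ?_⟩
    rw [← interior_Icc, ← hIcc]
    exact interior_maximal inter_subset_left
      (isOpen_connectedComponentIn_inter isOpen_interior interior_subset x) ⟨hc, hint⟩
  exact ⟨a, b, hab, hIcc, hfrontier (left_mem_Icc.2 hab) fun h => h.1.false,
    hfrontier (right_mem_Icc.2 hab) fun h => h.2.false⟩

theorem exists_lt_eq_zero_connectedComponents {T : Set ℝ} (hT : IsCompact T) {f : ℝ → ℝ}
    (hpos : ∀ x ∉ T, 0 < f x) (hfrontier : ∀ x ∈ frontier T, f x = 0)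
    (hderiv : ∀ x, f x = 0 → fderiv ℝ f x ≠ 0) (c : ConnectedComponents T) :
    ∃ a b : T, a < b ∧ (a : ConnectedComponents T) = c ∧ (b : ConnectedComponents T) = c ∧
      f a = 0 ∧ f b = 0 := by
  obtain ⟨x, rfl⟩ := ConnectedComponents.surjective_coe c
  obtain ⟨a, b, hab, hIcc, ha, hb⟩ := exists_connectedComponentIn_eq_Icc hT x.2
  have haC : a ∈ connectedComponentIn T x := hIcc ▸ left_mem_Icc.2 hab
  have hbC : b ∈ connectedComponentIn T x := hIcc ▸ right_mem_Icc.2 hab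
  have haT := connectedComponentIn_subset _ _ haC
  have hlt : a < b := by
    have hnontrivial := nontrivial_connectedComponentIn_of_fderiv_ne_zero haT hpos
      (hfrontier a ha).le (hderiv a (hfrontier a ha))
    rw [← connectedComponentIn_eq haC, hIcc] at hnontrivial
    exact hab.lt_of_ne fun h => not_nontrivial_singleton (Icc_self b ▸ h ▸ hnontrivial)
  exact ⟨⟨a, haT⟩, ⟨b, connectedComponentIn_subset _ _ hbC⟩, hlt,
    (connectedComponents_coe_eq_coe_iff.2 haC).symm,
    (connectedComponents_coe_eq_coe_iff.2 hbC).symm, hfrontier a ha, hfrontier b hb⟩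

theorem two_mul_card_connectedComponents_le_natDegree {T : Set ℝ} (hT : IsCompact T)
    {P : Polynomial ℝ} (hpos : ∀ x ∉ T, 0 < P.eval x)
    (hfrontier : ∀ x ∈ frontier T, P.eval x = 0)
    (hderiv : ∀ x, P.eval x = 0 → fderiv ℝ (fun x => P.eval x) x ≠ 0) :
    Finite (ConnectedComponents T) ∧ 2 * Nat.card (ConnectedComponents T) ≤ P.natDegree := by
  classical
  have hP : P ≠ 0 := by
    obtain ⟨x, hx⟩ := (ne_univ_iff_exists_notMem T).1 hT.ne_univ
    rintro rfl
    simpa using hpos x hx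
  have hends := exists_lt_eq_zero_connectedComponents hT hpos hfrontier hderiv
  choose a b hab ha hb hPa hPb using hends
  let endpoint (q : ConnectedComponents T × Bool) : T := bif q.2 then a q.1 else b q.1
  have hmk (q) : (endpoint q : ConnectedComponents T) = q.1 := by
    rcases q with ⟨c, _ | _⟩ <;> simp [endpoint, ha, hb]
  have hroots (q) : (endpoint q : ℝ) ∈ P.roots.toFinset := by
    rcases q with ⟨c, _ | _⟩ <;> simp [endpoint, hP, hPa, hPb]
  let root (q : ConnectedComponents T × Bool) : P.roots.toFinset := ⟨endpoint q, hroots q⟩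
  have hroot : Function.Injective root := by
    rintro ⟨c, i⟩ ⟨c', i'⟩ h
    have heq : endpoint (c, i) = endpoint (c', i') :=
      Subtype.ext (congrArg (fun r : P.roots.toFinset => (r : ℝ)) h)
    obtain rfl : c = c' := (hmk (c, i)).symm.trans (heq ▸ hmk (c', i'))
    cases i <;> cases i' <;> simp_all [endpoint, (hab c).ne, (hab c).ne']
  have hfinite : Finite (ConnectedComponents T × Bool) := .of_injective root hroot
  refine ⟨.prod_left Bool, ?_⟩
  calc 2 * Nat.card (ConnectedComponents T)
      = Nat.card (ConnectedComponents T × Bool) := by simp [Nat.card_prod, mul_comm]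
    _ ≤ Nat.card P.roots.toFinset := Nat.card_le_card_of_injective root hroot
    _ = P.roots.toFinset.card := Nat.card_eq_card_toFinset _ |>.trans (by simp)
    _ ≤ P.roots.card := P.roots.toFinset_card_le
    _ ≤ P.natDegree := P.card_roots'

theorem exists_surjective_connectedComponents {X Y : Type*} [TopologicalSpace X]
    [TopologicalSpace Y] {T : Set X} {K : X → Set Y} (hne : ∀ x ∈ T, (K x).Nonempty)
    (hK : ∀ I ⊆ T, IsPreconnected I → IsPreconnected (⋃ x ∈ I, K x)) :
    ∃ f : ConnectedComponents T → ConnectedComponents ↥(⋃ x ∈ T, K x), Function.Surjective f := by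
  have hmem {x : X} {y : Y} (hx : x ∈ T) (hy : y ∈ K x) : y ∈ ⋃ x ∈ T, K x :=
    mem_iUnion₂_of_mem hx hy
  choose rep hrep using ConnectedComponents.surjective_coe (α := T)
  choose y hy using fun x : T => hne x x.2
  refine ⟨fun c => (⟨y (rep c), hmem (rep c).2 (hy _)⟩ : ↥(⋃ x ∈ T, K x)), fun d => ?_⟩
  obtain ⟨⟨z, hz⟩, rfl⟩ := ConnectedComponents.surjective_coe d
  obtain ⟨x, hxT, hzx⟩ := mem_iUnion₂.1 hz
  refine ⟨((⟨x, hxT⟩ : T) : ConnectedComponents T), ?_⟩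
  have hxrep := connectedComponents_coe_eq_coe_iff.1
    (hrep ((⟨x, hxT⟩ : T) : ConnectedComponents T))
  rw [connectedComponents_coe_eq_coe_iff]
  refine (hK _ (connectedComponentIn_subset T _) isPreconnected_connectedComponentIn)
    |>.subset_connectedComponentIn (mem_iUnion₂_of_mem (mem_connectedComponentIn (rep _).2) (hy _))
      (biUnion_subset_biUnion_left (connectedComponentIn_subset T _))
      (mem_iUnion₂_of_mem hxrep hzx)

theorem two_le_card_connectedComponents {X : Type*} [TopologicalSpace X] {S : Set X}
    [Finite (ConnectedComponents S)] (hne : S.Nonempty) (hdisc : ¬ IsPreconnected S) :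
    2 ≤ Nat.card (ConnectedComponents S) := by
  by_contra! hlt
  have : Subsingleton (ConnectedComponents S) := Finite.card_le_one_iff_subsingleton.1 (by omega)
  obtain ⟨x, hx⟩ := hne
  have hsub : S ⊆ connectedComponentIn S x := fun y hy =>
    connectedComponents_coe_eq_coe_iff (x := ⟨x, hx⟩) (y := ⟨y, hy⟩).1 (Subsingleton.elim _ _)
  exact hdisc ((connectedComponentIn_subset S x).antisymm hsub ▸
    isPreconnected_connectedComponentIn)

end CountingComponents

section SimpleZeros

open MvPolynomial

variable {σ : Type*}

theorem hasFDerivAt_eval [Fintype σ] (F : MvPolynomial σ ℝ) (v : σ → ℝ) :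
    HasFDerivAt (fun v => eval v F)
      (∑ i, eval v (pderiv i F) • ContinuousLinearMap.proj (R := ℝ) (φ := fun _ => ℝ) i) v := by
  classical
  induction F using MvPolynomial.induction_on with
  | C a => simpa using hasFDerivAt_const a v
  | add F G hF hG => simpa [add_smul, Finset.sum_add_distrib] using hF.fun_add hG
  | mul_X F i hF =>
    have hX : HasFDerivAt (fun v : σ → ℝ => v i)
        (ContinuousLinearMap.proj (R := ℝ) (φ := fun _ => ℝ) i) v := hasFDerivAt_apply i v
    simpa [Derivation.leibniz, pderiv_X, Pi.single_apply, add_smul, Finset.sum_add_distrib,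
      apply_ite, ite_smul, Finset.smul_sum, mul_smul] using hF.fun_mul hX

theorem fderiv_eval_self [Finite σ] {F : MvPolynomial σ ℝ} {k : ℕ} (hF : F.IsHomogeneous k)
    (v : σ → ℝ) : fderiv ℝ (fun v => eval v F) v v = k * eval v F := by
  have := Fintype.ofFinite σ
  have heuler := congrArg (eval v) hF.sum_X_mul_pderiv
  simpa [(hasFDerivAt_eval F v).fderiv, mul_comm] using heuler

/-- Projecting onto the hyperplane along a coordinate axis does not change `F` modulo the equation
of the hyperplane, and turns it into a polynomial vanishing everywhere. -/
theorem dvd_of_forall_eval_eq_zero [Fintype σ] {K : Type*} [Field K] [Infinite K] {a : σ → K}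
    (ha : a ≠ 0) {F : MvPolynomial σ K} (hF : ∀ v, ∑ i, a i * v i = 0 → eval v F = 0) :
    (∑ i, C (a i) * X i) ∣ F := by
  classical
  obtain ⟨i, hi⟩ := Function.ne_iff.1 ha
  set ℓ : MvPolynomial σ K := ∑ i, C (a i) * X i with hℓ
  let e : σ → K := Pi.single i (a i)⁻¹
  have he : ∑ j, a j * e j = 1 := by
    simpa [e, Pi.single_apply] using mul_inv_cancel₀ hi
  let projection : MvPolynomial σ K →ₐ[K] MvPolynomial σ K := aeval fun j => X j - C (e j) * ℓ
  have hzero : projection F = 0 := by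
    refine MvPolynomial.funext fun v => ?_
    have hcomp : (aeval v).comp projection = aeval fun j => v j - e j * eval v ℓ :=
      algHom_ext fun j => by simp [projection, aeval_eq_eval]
    have heval : eval v (projection F) = eval (fun j => v j - e j * eval v ℓ) F :=
      DFunLike.congr_fun hcomp F
    rw [heval, map_zero]
    refine hF _ ?_
    simp only [mul_sub, Finset.sum_sub_distrib, ← mul_assoc, ← Finset.sum_mul, he]
    simp [hℓ]
  have hmk : (Ideal.Quotient.mkₐ K (Ideal.span {ℓ})).comp projection =
      Ideal.Quotient.mkₐ K (Ideal.span {ℓ}) := by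
    refine algHom_ext fun j => ?_
    have hℓ0 : Ideal.Quotient.mk (Ideal.span {ℓ}) ℓ = 0 := Ideal.Quotient.mk_singleton_self ℓ
    simp [projection, hℓ0]
  rw [← Ideal.mem_span_singleton, ← Ideal.Quotient.eq_zero_iff_mem]
  simpa [hzero] using (DFunLike.congr_fun hmk F).symm

theorem exists_eq_smul_of_mul_eq_mul {K : Type*} [Field K] {v w : Fin 2 → K} (hv : v ≠ 0)
    (h : v 0 * w 1 = v 1 * w 0) : ∃ c : K, w = c • v := by
  by_cases h0 : v 0 = 0
  · have h1 : v 1 ≠ 0 := fun h1 => hv (_root_.funext (Fin.forall_fin_two.2 ⟨h0, h1⟩))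
    have hw0 : w 0 = 0 := by simpa [h0, h1] using h
    exact ⟨w 1 / v 1, _root_.funext (Fin.forall_fin_two.2 ⟨by simp [h0, hw0], by simp [h1]⟩)⟩
  · refine ⟨w 0 / v 0, _root_.funext (Fin.forall_fin_two.2 ⟨by simp [h0], ?_⟩)⟩
    rw [Pi.smul_apply, smul_eq_mul, div_mul_eq_mul_div, eq_div_iff h0]
    linear_combination h

/-- At a singular zero `v`, both the form and, by Leibniz, its quotient by the equation of the line
through `v` vanish on that line, so the square of the equation divides the form. -/
theorem exists_eval_pderiv_ne_zero_of_squarefree {K : Type*} [Field K] [Infinite K]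
    {F : MvPolynomial (Fin 2) K} {k : ℕ} (hF : F.IsHomogeneous k) (hsf : Squarefree F)
    {v : Fin 2 → K} (hv : v ≠ 0) (hFv : eval v F = 0) : ∃ i, eval v (pderiv i F) ≠ 0 := by
  by_contra! hsing
  let a : Fin 2 → K := ![-v 1, v 0]
  have hline (w : Fin 2 → K) : ∑ i, a i * w i = 0 ↔ v 0 * w 1 = v 1 * w 0 := by
    rw [Fin.sum_univ_two, add_comm, ← sub_eq_zero (a := v 0 * w 1)]
    simp [a, sub_eq_add_neg]
  have ha : a ≠ 0 := fun h => hv <| _root_.funext <| Fin.forall_fin_two.2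
    ⟨congrFun h 1, neg_eq_zero.1 (congrFun h 0)⟩
  have hvanish {G : MvPolynomial (Fin 2) K} {m : ℕ} (hG : G.IsHomogeneous m)
      (hGv : eval v G = 0) (w) (hw : ∑ i, a i * w i = 0) : eval w G = 0 := by
    obtain ⟨c, rfl⟩ := exists_eq_smul_of_mul_eq_mul hv ((hline w).1 hw)
    rw [eval_smul_of_isHomogeneous hG, hGv, mul_zero]
  obtain ⟨H, rfl⟩ := dvd_of_forall_eval_eq_zero ha (hvanish hF hFv)
  obtain ⟨i, hi : a i ≠ 0⟩ := Function.ne_iff.1 ha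
  have hH : (∑ i, C (a i) * X i) ∣ H := by
    refine dvd_of_forall_eval_eq_zero ha fun w hw => ?_
    have hpderiv := hvanish (hF.pderiv (i := i)) (hsing i) w hw
    have hpderiv_line : pderiv i (∑ j, C (a j) * X j) = C (a i) := by
      fin_cases i <;> simp [pderiv_X]
    rw [Derivation.leibniz, hpderiv_line] at hpderiv
    have h0 : a 0 * w 0 + a 1 * w 1 = 0 := by simpa using hw
    simpa [h0, hi] using hpderiv
  have hunit := hsf _ (mul_dvd_mul_left _ hH)
  exact (hunit.map (eval v)).ne_zero (by simpa using (hline v).2 (mul_comm _ _))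

theorem isSmoothAtRealPoints_of_squarefree_map {F : MvPolynomial (Fin 2) ℝ} {k : ℕ}
    (hF : F.IsHomogeneous k) (hsf : Squarefree (map Complex.ofRealHom F)) :
    IsSmoothAtRealPoints F := by
  intro v hv hFv hfderiv
  have hv_complex : Complex.ofRealHom ∘ v ≠ 0 := fun h =>
    hv (_root_.funext fun i => Complex.ofRealHom.injective ((congrFun h i).trans (by simp)))
  obtain ⟨i, hi⟩ := exists_eval_pderiv_ne_zero_of_squarefree (hF.map _) hsf
    hv_complex (by rw [← map_eval, hFv, map_zero])
  rw [pderiv_map, ← map_eval, map_ne_zero] at hi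
  have happly := DFunLike.congr_fun hfderiv (Pi.single i 1)
  rw [(hasFDerivAt_eval F v).fderiv] at happly
  fin_cases i <;> simp_all

end SimpleZeros

section QuadraticFamily

open MvPolynomial

variable {n : ℕ} {M : (Fin 2 → ℝ) → Matrix (Fin n) (Fin n) ℝ} {F : MvPolynomial (Fin 2) ℝ} {k : ℕ}
  {v w : Fin 2 → ℝ}

theorem fderiv_eval_apply_ne_zero (hF : F.IsHomogeneous k) (hsm : IsSmoothAtRealPoints F)
    (hv : eval v F = 0) (hvw : LinearIndependent ℝ ![v, w]) :
    fderiv ℝ (fun v => eval v F) v w ≠ 0 := by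
  intro hw
  have hspan : Submodule.span ℝ (range ![v, w]) = ⊤ :=
    hvw.span_eq_top_of_card_eq_finrank (by simp)
  have hself : fderiv ℝ (fun v => eval v F) v v = 0 := by
    rw [fderiv_eval_self hF, hv, mul_zero]
  exact hsm v (hvw.ne_zero 0) hv (ContinuousLinearMap.coe_injective
    (LinearMap.ext_on_range hspan (Fin.forall_fin_two.2 ⟨hself, hw⟩)))

theorem fderiv_eval_add_smul_ne_zero (hF : F.IsHomogeneous k) (hsm : IsSmoothAtRealPoints F)
    {x : ℝ} (hx : eval (v + x • w) F = 0) (hvw : LinearIndependent ℝ ![v, w]) :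
    fderiv ℝ (fun x : ℝ => eval (v + x • w) F) x ≠ 0 := by
  have hline : HasDerivAt (fun x : ℝ => v + x • w) w x := by
    simpa using ((hasDerivAt_id x).smul_const w).const_add v
  have hdiff := (hasFDerivAt_eval F (v + x • w)).differentiableAt
  have hcomp := hdiff.hasFDerivAt.comp_hasDerivAt x hline
  have hne := fderiv_eval_apply_ne_zero hF hsm hx
    ((LinearIndependent.pair_add_smul_left_iff x).2 hvw)
  intro hzero
  exact hne (hcomp.deriv.symm.trans (DFunLike.congr_fun hzero 1))

theorem nonnegLocus_smul (hscale : ∀ (c : ℝ) t, M (c • t) = c ^ 2 • M t) {c : ℝ} (hc : c ≠ 0)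
    (t : Fin 2 → ℝ) : nonnegLocus (M (c • t)) = nonnegLocus (M t) := by
  ext y
  obtain ⟨u, rfl⟩ := RP.mk_surjective y
  rw [mk_mem_nonnegLocus, mk_mem_nonnegLocus, hscale, Matrix.smul_mulVec, dotProduct_smul,
    smul_eq_mul, mul_nonneg_iff_of_pos_left (by positivity)]

theorem isCompact_nonnegLocus_nonempty (hM : Continuous M)
    (hscale : ∀ (c : ℝ) t, M (c • t) = c ^ 2 • M t) (hw : nonnegLocus (M w) = ∅)
    (v : Fin 2 → ℝ) : IsCompact {x : ℝ | (nonnegLocus (M (v + x • w))).Nonempty} := by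
  refine Metric.isCompact_of_isClosed_isBounded
    (isClosed_nonnegLocus_nonempty (hM.comp (by fun_prop))) (Bornology.isBounded_def.2 ?_)
  have hclosed : IsClosed {y : ℝ | (nonnegLocus (M (w + y • v))).Nonempty} :=
    isClosed_nonnegLocus_nonempty (hM.comp (by fun_prop))
  have hnhds := hclosed.isOpen_compl.mem_nhds (x := 0) (by simp [hw])
  filter_upwards [tendsto_inv₀_cobounded.eventually hnhds, Bornology.eventually_ne_cobounded 0]
    with x hx hx0
  have hrescale : v + x • w = x • (w + x⁻¹ • v) := by
    rw [smul_add, smul_inv_smul₀ hx0, add_comm]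
  rwa [mem_compl_iff, mem_ofPred_eq, hrescale, nonnegLocus_smul hscale hx0]

theorem iUnion_nonnegLocus_eq (hscale : ∀ (c : ℝ) t, M (c • t) = c ^ 2 • M t)
    (hvw : LinearIndependent ℝ ![v, w]) (hw : nonnegLocus (M w) = ∅) :
    ⋃ t ∈ ({0}ᶜ : Set (Fin 2 → ℝ)), nonnegLocus (M t) =
      ⋃ x ∈ {x : ℝ | (nonnegLocus (M (v + x • w))).Nonempty}, nonnegLocus (M (v + x • w)) := by
  have hspan : Submodule.span ℝ {v, w} = ⊤ := by
    simpa [pair_comm] using hvw.span_eq_top_of_card_eq_finrank (by simp)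
  refine subset_antisymm (iUnion₂_subset fun t ht y hy => ?_) (iUnion₂_subset fun x _ y hy => ?_)
  · obtain ⟨a, b, rfl⟩ := Submodule.mem_span_pair.1 (hspan ▸ Submodule.mem_top : t ∈ _)
    have ha : a ≠ 0 := by
      rintro rfl
      rw [zero_smul, zero_add] at ht hy
      rw [nonnegLocus_smul hscale (left_ne_zero_of_smul ht), hw] at hy
      exact hy
    have hab : a • v + b • w = a • (v + (b / a) • w) := by
      rw [smul_add, smul_smul, mul_div_cancel₀ _ ha]
    rw [hab, nonnegLocus_smul hscale ha] at hy
    exact mem_iUnion₂_of_mem ⟨y, hy⟩ hy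
  · exact mem_iUnion₂_of_mem (((LinearIndependent.pair_add_smul_left_iff x).2 hvw).ne_zero 0) hy

theorem card_connectedComponents_iUnion_nonnegLocus_le (hM : Continuous M)
    (hsymm : ∀ t, (M t).IsSymm) (hscale : ∀ (c : ℝ) t, M (c • t) = c ^ 2 • M t)
    (hF : F.IsHomogeneous k) (hsm : IsSmoothAtRealPoints F) (hdet : ∀ t, eval t F = (-M t).det)
    (hw0 : w ≠ 0) (hw : nonnegLocus (M w) = ∅) :
    Finite (ConnectedComponents ↥(⋃ t ∈ ({0}ᶜ : Set (Fin 2 → ℝ)), nonnegLocus (M t))) ∧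
      2 * Nat.card (ConnectedComponents ↥(⋃ t ∈ ({0}ᶜ : Set (Fin 2 → ℝ)), nonnegLocus (M t))) ≤
        k := by
  obtain ⟨v, hwv⟩ := exists_linearIndependent_pair_of_one_lt_finrank (R := ℝ) (by simp) hw0
  have hvw : LinearIndependent ℝ ![v, w] := LinearIndependent.pair_symm_iff.1 hwv
  have hN : Continuous fun x : ℝ => M (v + x • w) := hM.comp (by fun_prop)
  have hNsymm (x : ℝ) : (M (v + x • w)).IsSymm := hsymm _
  obtain ⟨P, hPdeg, hP⟩ := exists_natDegree_le_eval_add_smul hF v w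
  have hPdet (x : ℝ) : P.eval x = (-M (v + x • w)).det := (hP x).trans (hdet _)
  have hderiv (x : ℝ) (hx : P.eval x = 0) : fderiv ℝ (fun x => P.eval x) x ≠ 0 :=
    funext hP ▸ fderiv_eval_add_smul_ne_zero hF hsm (hP x ▸ hx) hvw
  have hT := isCompact_nonnegLocus_nonempty hM hscale hw v
  obtain ⟨hfin, hcard⟩ := two_mul_card_connectedComponents_le_natDegree hT
    (fun x hx => hPdet x ▸ det_neg_pos_of_nonnegLocus_eq_empty (hNsymm x)
      (not_nonempty_iff_eq_empty.1 hx))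
    (fun x hx => hPdet x ▸ det_neg_eq_zero_of_mem_frontier hN hNsymm hx) hderiv
  obtain ⟨f, hf⟩ := exists_surjective_connectedComponents
    (T := {x : ℝ | (nonnegLocus (M (v + x • w))).Nonempty}) (fun _ hx => hx) fun I hIT hI =>
      isPreconnected_biUnion_nonnegLocus hN hNsymm hI hIT
  rw [iUnion_nonnegLocus_eq hscale hvw hw]
  refine ⟨.of_surjective f hf, ?_⟩
  grw [Nat.card_le_card_of_surjective f hf, hcard, hPdeg]

theorem isPreconnected_iUnion_nonnegLocus (hM : Continuous M) (hsymm : ∀ t, (M t).IsSymm)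
    (hne : ∀ t ≠ 0, (nonnegLocus (M t)).Nonempty) :
    IsPreconnected (⋃ t ∈ ({0}ᶜ : Set (Fin 2 → ℝ)), nonnegLocus (M t)) :=
  isPreconnected_biUnion_nonnegLocus hM hsymm
    (isConnected_compl_singleton_of_one_lt_rank (by simp) 0).isPreconnected hne

end QuadraticFamily

section Pencil

open MvPolynomial Matrix

theorem isHomogeneous_det {m σ R : Type*} [Fintype m] [DecidableEq m] [CommRing R] {k : ℕ}
    {A : Matrix m m (MvPolynomial σ R)} (hA : ∀ i j, (A i j).IsHomogeneous k) :
    A.det.IsHomogeneous (Fintype.card m * k) := by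
  rw [det_apply']
  refine .sum _ _ _ fun τ _ => ?_
  have hprod : (∏ i, A (τ i) i).IsHomogeneous (∑ _ : m, k) := .prod _ _ _ fun i _ => hA (τ i) i
  rw [Finset.sum_const, Finset.card_univ, smul_eq_mul] at hprod
  simpa using hprod.C_mul (τ.sign : R)

variable {n : ℕ} (M M₁ M₂ M₃ : Matrix (Fin n) (Fin n) ℝ)

/-- The polynomial `v ↦ vᵀ M v`. -/
noncomputable def quadraticPolynomial : MvPolynomial (Fin n) ℝ :=
  ∑ i, X i * M.toMvPolynomial i

/-- The defining equation `Q₁Q₃ − Q₂²` of the discriminant of the conic bundle. -/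
noncomputable def discriminantQuartic : MvPolynomial (Fin n) ℝ :=
  quadraticPolynomial M₁ * quadraticPolynomial M₃ - quadraticPolynomial M₂ ^ 2

/-- The fibre over `t` of the double cover `z² = t₀²Q₁ + 2t₀t₁Q₂ + t₁²Q₃`, as the matrix of the
quadratic form on the right-hand side. -/
def pencil (t : Fin 2 → ℝ) : Matrix (Fin n) (Fin n) ℝ :=
  t 0 ^ 2 • M₁ + (2 * t 0 * t 1) • M₂ + t 1 ^ 2 • M₃

/-- The determinant of `pencil M₁ M₂ M₃` as a binary form; for `n = 3` it is the real form of
`binarySextic M₁ M₂ M₃`. -/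
noncomputable def pencilDet : MvPolynomial (Fin 2) ℝ :=
  det (of fun i j =>
    C (M₁ i j) * X 0 ^ 2 + C (2 * M₂ i j) * (X 0 * X 1) + C (M₃ i j) * X 1 ^ 2)

theorem eval_quadraticPolynomial (v : Fin n → ℝ) :
    eval v (quadraticPolynomial M) = v ⬝ᵥ M *ᵥ v := by
  simp [quadraticPolynomial, dotProduct, toMvPolynomial_eval_eq_apply]

theorem isHomogeneous_quadraticPolynomial : (quadraticPolynomial M).IsHomogeneous 2 :=
  .sum _ _ _ fun i _ => (isHomogeneous_X ℝ i).mul (M.toMvPolynomial_isHomogeneous i)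

theorem eval_discriminantQuartic (v : Fin n → ℝ) :
    eval v (discriminantQuartic M₁ M₂ M₃) =
      (v ⬝ᵥ M₁ *ᵥ v) * (v ⬝ᵥ M₃ *ᵥ v) - (v ⬝ᵥ M₂ *ᵥ v) ^ 2 := by
  simp [discriminantQuartic, eval_quadraticPolynomial]

theorem isHomogeneous_discriminantQuartic : (discriminantQuartic M₁ M₂ M₃).IsHomogeneous 4 :=
  ((isHomogeneous_quadraticPolynomial M₁).mul (isHomogeneous_quadraticPolynomial M₃)).sub
    ((isHomogeneous_quadraticPolynomial M₂).pow 2)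

theorem continuous_pencil : Continuous (pencil M₁ M₂ M₃) := by
  unfold pencil
  fun_prop

theorem pencil_smul (c : ℝ) (t : Fin 2 → ℝ) :
    pencil M₁ M₂ M₃ (c • t) = c ^ 2 • pencil M₁ M₂ M₃ t := by
  simp only [pencil, Pi.smul_apply, smul_eq_mul, smul_add, smul_smul]
  congr 3 <;> ring

theorem dotProduct_pencil_mulVec (t : Fin 2 → ℝ) (v : Fin n → ℝ) :
    v ⬝ᵥ pencil M₁ M₂ M₃ t *ᵥ v =
      t 0 ^ 2 * (v ⬝ᵥ M₁ *ᵥ v) + 2 * t 0 * t 1 * (v ⬝ᵥ M₂ *ᵥ v) +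
        t 1 ^ 2 * (v ⬝ᵥ M₃ *ᵥ v) := by
  simp [pencil, add_mulVec, smul_mulVec]

theorem eval_pencilDet (t : Fin 2 → ℝ) :
    eval t (pencilDet M₁ M₂ M₃) = (pencil M₁ M₂ M₃ t).det := by
  rw [pencilDet, RingHom.map_det]
  congr 1
  ext i j
  simp only [RingHom.mapMatrix_apply, map_apply, of_apply, map_add, map_mul, map_pow, eval_C,
    eval_X, pencil, Matrix.add_apply, Matrix.smul_apply, smul_eq_mul]
  ring

theorem isHomogeneous_pencilDet : (pencilDet M₁ M₂ M₃).IsHomogeneous (n * 2) := by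
  have hX (i : Fin 2) : (X i : MvPolynomial (Fin 2) ℝ).IsHomogeneous 1 := isHomogeneous_X ℝ i
  have hdet : (pencilDet M₁ M₂ M₃).IsHomogeneous (Fintype.card (Fin n) * 2) :=
    isHomogeneous_det fun i j => ((((hX 0).pow 2).C_mul _).add
      (((hX 0).mul (hX 1)).C_mul _)).add (((hX 1).pow 2).C_mul _)
  rwa [Fintype.card_fin] at hdet

theorem map_pencilDet (M₁ M₂ M₃ : Matrix (Fin 3) (Fin 3) ℝ) :
    map Complex.ofRealHom (pencilDet M₁ M₂ M₃) = binarySextic M₁ M₂ M₃ := by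
  rw [pencilDet, binarySextic, RingHom.map_det]
  congr 1
  ext1 i j
  simp only [RingHom.mapMatrix_apply, map_apply, of_apply, map_add, map_mul, map_pow, map_C, map_X,
    map_ofNat C 2, MvPolynomial.map_ofNat, Complex.ofRealHom_eq_coe]
  ring

variable {M₁ M₂ M₃}

theorem isSymm_pencil (hM₁ : M₁.IsSymm) (hM₂ : M₂.IsSymm) (hM₃ : M₃.IsSymm) (t : Fin 2 → ℝ) :
    (pencil M₁ M₂ M₃ t).IsSymm :=
  ((hM₁.smul _).add (hM₂.smul _)).add (hM₃.smul _)

theorem IsSmoothAtRealPoints.C_mul {F : MvPolynomial (Fin n) ℝ} (hF : IsSmoothAtRealPoints F)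
    {c : ℝ} (hc : c ≠ 0) : IsSmoothAtRealPoints (C c * F) := by
  intro v hv hFv
  simp only [eval_mul, eval_C, mul_eq_zero, hc, false_or] at hFv ⊢
  rw [fderiv_const_mul (hasFDerivAt_eval F v).differentiableAt]
  exact smul_ne_zero hc (hF v hv hFv)

theorem eq_zero_of_mul_binaryQuadratic_nonpos {a b c : ℝ} {t : Fin 2 → ℝ}
    (hdisc : 0 < a * c - b ^ 2)
    (h : a * (t 0 ^ 2 * a + 2 * t 0 * t 1 * b + t 1 ^ 2 * c) ≤ 0) : t = 0 := by
  have hsquares : (t 0 * a + t 1 * b) ^ 2 + t 1 ^ 2 * (a * c - b ^ 2) ≤ 0 := by linarith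
  obtain ⟨h0, h1⟩ := (add_eq_zero_iff_of_nonneg (by positivity) (by positivity)).1
    (hsquares.antisymm (by positivity))
  have ha : a ≠ 0 := by
    rintro rfl
    linarith [sq_nonneg b]
  have ht1 : t 1 = 0 := by simpa [hdisc.ne'] using h1
  have ht0 : t 0 = 0 := by simpa [ht1, ha] using h0
  exact _root_.funext (Fin.forall_fin_two.2 ⟨ht0, ht1⟩)

theorem exists_binaryQuadratic_nonneg_iff {a b c : ℝ} :
    (∃ t : Fin 2 → ℝ, t ≠ 0 ∧ 0 ≤ t 0 ^ 2 * a + 2 * t 0 * t 1 * b + t 1 ^ 2 * c) ↔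
      0 ≤ a ∨ a * c - b ^ 2 ≤ 0 := by
  constructor
  · rintro ⟨t, ht, hnonneg⟩
    by_contra! ⟨ha, hdisc⟩
    exact ht (eq_zero_of_mul_binaryQuadratic_nonpos hdisc
      (mul_nonpos_of_nonpos_of_nonneg ha.le hnonneg))
  · intro h
    by_cases ha : 0 ≤ a
    · exact ⟨![1, 0], by simp, by simpa using ha⟩
    · refine ⟨![-b, a], fun h0 => ha (congrFun h0 1).ge, ?_⟩
      have hval : (-b) ^ 2 * a + 2 * (-b) * a * b + a ^ 2 * c = a * (a * c - b ^ 2) := by ring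
      exact hval ▸ mul_nonneg_of_nonpos_of_nonpos (not_le.1 ha).le (h.resolve_left ha)

theorem mul_sub_sq_nonpos_of_binaryQuadratic_neg {a b c : ℝ} {t : Fin 2 → ℝ}
    (hneg : t 0 ^ 2 * a + 2 * t 0 * t 1 * b + t 1 ^ 2 * c < 0) (ha : 0 ≤ a) :
    a * c - b ^ 2 ≤ 0 := by
  by_contra! hdisc
  obtain rfl := eq_zero_of_mul_binaryQuadratic_nonpos hdisc
    (mul_nonpos_of_nonneg_of_nonpos ha hneg.le)
  simp at hneg

/-- The image of the real points of the conic bundle: the points where the real binary quadratic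
form `t₀²Q₁ + 2t₀t₁Q₂ + t₁²Q₃` takes a nonnegative value at some `t ≠ 0`. -/
def conicBundleImage (M₁ M₂ M₃ : Matrix (Fin n) (Fin n) ℝ) : Set (RP n) :=
  ⋃ t ∈ ({0}ᶜ : Set (Fin 2 → ℝ)), nonnegLocus (pencil M₁ M₂ M₃ t)

theorem mk_mem_conicBundleImage {v : {v : Fin n → ℝ // v ≠ 0}} :
    RP.mk v ∈ conicBundleImage M₁ M₂ M₃ ↔
      0 ≤ v.1 ⬝ᵥ M₁ *ᵥ v.1 ∨ eval v.1 (discriminantQuartic M₁ M₂ M₃) ≤ 0 := by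
  rw [eval_discriminantQuartic, ← exists_binaryQuadratic_nonneg_iff]
  simp [conicBundleImage, mk_mem_nonnegLocus, dotProduct_pencil_mulVec]

theorem conicBundleImage_eq_locus : conicBundleImage M₁ M₂ M₃ =
    RP.locus {v | 0 ≤ v ⬝ᵥ M₁ *ᵥ v ∨ eval v (discriminantQuartic M₁ M₂ M₃) ≤ 0} := by
  ext y
  constructor
  · intro hy
    obtain ⟨v, rfl⟩ := RP.mk_surjective y
    exact ⟨v, rfl, mk_mem_conicBundleImage.1 hy⟩
  · rintro ⟨v, rfl, hv⟩
    exact mk_mem_conicBundleImage.2 hv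

theorem conicBundleImage_eq_nonposLocus {t : Fin 2 → ℝ}
    (ht : nonnegLocus (pencil M₁ M₂ M₃ t) = ∅) :
    conicBundleImage M₁ M₂ M₃ = nonposLocus (discriminantQuartic M₁ M₂ M₃) := by
  ext y
  obtain ⟨v, rfl⟩ := RP.mk_surjective y
  rw [mk_mem_conicBundleImage,
    mk_mem_nonposLocus (isHomogeneous_discriminantQuartic M₁ M₂ M₃) (by decide),
    or_iff_right_iff_imp, eval_discriminantQuartic]
  have hneg : v.1 ⬝ᵥ pencil M₁ M₂ M₃ t *ᵥ v.1 < 0 := by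
    rw [← not_le, ← mk_mem_nonnegLocus, ht]
    exact notMem_empty _
  rw [dotProduct_pencil_mulVec] at hneg
  exact mul_sub_sq_nonpos_of_binaryQuadratic_neg hneg

end Pencil

section ConicBundle

open MvPolynomial Matrix

variable {n : ℕ} {M₁ M₂ M₃ : Matrix (Fin n) (Fin n) ℝ}

theorem exists_nonnegLocus_pencil_eq_empty (hM₁ : M₁.IsSymm) (hM₂ : M₂.IsSymm) (hM₃ : M₃.IsSymm)
    (hdisc : ¬ IsPreconnected (conicBundleImage M₁ M₂ M₃)) :
    ∃ t ≠ 0, nonnegLocus (pencil M₁ M₂ M₃ t) = ∅ := by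
  contrapose! hdisc
  exact isPreconnected_iUnion_nonnegLocus (continuous_pencil M₁ M₂ M₃)
    (isSymm_pencil hM₁ hM₂ hM₃) hdisc

theorem card_connectedComponents_conicBundleImage_le (hM₁ : M₁.IsSymm) (hM₂ : M₂.IsSymm)
    (hM₃ : M₃.IsSymm) (hdet : IsSmoothAtRealPoints (pencilDet M₁ M₂ M₃)) {t : Fin 2 → ℝ}
    (ht0 : t ≠ 0) (ht : nonnegLocus (pencil M₁ M₂ M₃ t) = ∅) :
    Finite (ConnectedComponents (conicBundleImage M₁ M₂ M₃)) ∧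
      Nat.card (ConnectedComponents (conicBundleImage M₁ M₂ M₃)) ≤ n := by
  obtain ⟨hfin, hcard⟩ := card_connectedComponents_iUnion_nonnegLocus_le
    (continuous_pencil M₁ M₂ M₃) (isSymm_pencil hM₁ hM₂ hM₃) (pencil_smul M₁ M₂ M₃)
    ((isHomogeneous_pencilDet M₁ M₂ M₃).C_mul ((-1) ^ n))
    (hdet.C_mul (pow_ne_zero n (neg_ne_zero.2 one_ne_zero)))
    (fun s => by simp [det_neg, eval_pencilDet]) ht0 ht
  rw [mul_comm] at hcard
  exact ⟨hfin, le_of_mul_le_mul_right hcard two_pos⟩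

theorem disconnected_image_components_eq_quartic_components_general {n : ℕ} (hn : 3 ≤ n)
    (M₁ M₂ M₃ : Matrix (Fin n) (Fin n) ℝ)
    (hM₁ : M₁.IsSymm) (hM₂ : M₂.IsSymm) (hM₃ : M₃.IsSymm)
    (Q₁ Q₂ Q₃ : (Fin n → ℝ) → ℝ)
    (hQ₁ : ∀ v, Q₁ v = v ⬝ᵥ (M₁ *ᵥ v)) (hQ₂ : ∀ v, Q₂ v = v ⬝ᵥ (M₂ *ᵥ v))
    (hQ₃ : ∀ v, Q₃ v = v ⬝ᵥ (M₃ *ᵥ v))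
    (hsm : ∀ P : Fin n → ℝ, P ≠ 0 → Q₁ P * Q₃ P - Q₂ P ^ 2 = 0 →
      fderiv ℝ (fun v => Q₁ v * Q₃ v - Q₂ v ^ 2) P ≠ 0)
    (hdet : IsSmoothAtRealPoints (pencilDet M₁ M₂ M₃))
    (S₂ Z : Set (RP n))
    (hS₂ : S₂ = {x | ∃ P : {v : Fin n → ℝ // v ≠ 0}, Quot.mk (projRel n) P = x ∧
      (0 ≤ Q₁ (P : Fin n → ℝ) ∨
        Q₁ (P : Fin n → ℝ) * Q₃ (P : Fin n → ℝ) - Q₂ (P : Fin n → ℝ) ^ 2 ≤ 0)})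
    (hZ : Z = {x | ∃ P : {v : Fin n → ℝ // v ≠ 0}, Quot.mk (projRel n) P = x ∧
      Q₁ (P : Fin n → ℝ) * Q₃ (P : Fin n → ℝ) - Q₂ (P : Fin n → ℝ) ^ 2 = 0})
    (hne : S₂.Nonempty) (hdisc : ¬ IsConnected S₂) :
    Nonempty (ConnectedComponents ↥S₂ ≃ ConnectedComponents ↥Z) ∧
    ∃ k, 2 ≤ k ∧ k ≤ n ∧ Nonempty (ConnectedComponents ↥S₂ ≃ Fin k) := by
  have hF (v) : Q₁ v * Q₃ v - Q₂ v ^ 2 = eval v (discriminantQuartic M₁ M₂ M₃) := by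
    rw [eval_discriminantQuartic, hQ₁, hQ₂, hQ₃]
  simp only [hF] at hsm hS₂ hZ
  simp only [hQ₁] at hS₂
  obtain rfl : S₂ = conicBundleImage M₁ M₂ M₃ := hS₂.trans conicBundleImage_eq_locus.symm
  obtain rfl : Z = vanishingLocus (discriminantQuartic M₁ M₂ M₃) := hZ
  have hdisc' : ¬ IsPreconnected (conicBundleImage M₁ M₂ M₃) := fun h => hdisc ⟨hne, h⟩
  obtain ⟨t, ht0, ht⟩ := exists_nonnegLocus_pencil_eq_empty hM₁ hM₂ hM₃ hdisc'
  obtain ⟨hfin, hcard⟩ := card_connectedComponents_conicBundleImage_le hM₁ hM₂ hM₃ hdet ht0 ht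
  refine ⟨?_, _, two_le_card_connectedComponents hne hdisc', hcard, ⟨Finite.equivFin _⟩⟩
  rw [conicBundleImage_eq_nonposLocus ht] at hdisc' ⊢
  exact nonempty_connectedComponents_nonposLocus_equiv_vanishingLocus hn
    (isHomogeneous_discriminantQuartic M₁ M₂ M₃) hsm hdisc'

end ConicBundle

open Matrix in
/-- If the quartic `Δ = {Q₁Q₃ − Q₂² = 0}` is smooth at its real points and the binary sextic
`det(t₀²M₁ + 2t₀t₁M₂ + t₁²M₃)` is nonzero and squarefree over `ℂ`, and if the image
`S₂ = {Q₁ ≥ 0} ∪ {f ≤ 0} ⊆ ℝP²` of `Y(ℝ)` is nonempty and disconnected, then `S₂` has the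
same number of connected components as the real locus `Z` of `Δ`, and this number is 2 or 3. -/
theorem disconnected_image_components_eq_quartic_components
    (M₁ M₂ M₃ : Matrix (Fin 3) (Fin 3) ℝ)
    (hM₁ : M₁.IsSymm) (hM₂ : M₂.IsSymm) (hM₃ : M₃.IsSymm)
    (Q₁ Q₂ Q₃ : (Fin 3 → ℝ) → ℝ)
    (hQ₁ : ∀ v, Q₁ v = v ⬝ᵥ (M₁ *ᵥ v)) (hQ₂ : ∀ v, Q₂ v = v ⬝ᵥ (M₂ *ᵥ v))
    (hQ₃ : ∀ v, Q₃ v = v ⬝ᵥ (M₃ *ᵥ v))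
    (hsm : ∀ P : Fin 3 → ℝ, P ≠ 0 → Q₁ P * Q₃ P - Q₂ P ^ 2 = 0 →
      fderiv ℝ (fun v => Q₁ v * Q₃ v - Q₂ v ^ 2) P ≠ 0)
    (hp : binarySextic M₁ M₂ M₃ ≠ 0) (hsf : Squarefree (binarySextic M₁ M₂ M₃))
    (S₂ Z : Set (RP 3))
    (hS₂ : S₂ = {x | ∃ P : {v : Fin 3 → ℝ // v ≠ 0}, Quot.mk (projRel 3) P = x ∧
      (0 ≤ Q₁ (P : Fin 3 → ℝ) ∨
        Q₁ (P : Fin 3 → ℝ) * Q₃ (P : Fin 3 → ℝ) - Q₂ (P : Fin 3 → ℝ) ^ 2 ≤ 0)})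
    (hZ : Z = {x | ∃ P : {v : Fin 3 → ℝ // v ≠ 0}, Quot.mk (projRel 3) P = x ∧
      Q₁ (P : Fin 3 → ℝ) * Q₃ (P : Fin 3 → ℝ) - Q₂ (P : Fin 3 → ℝ) ^ 2 = 0})
    (hne : S₂.Nonempty) (hdisc : ¬ IsConnected S₂) :
    Nonempty (ConnectedComponents ↥S₂ ≃ ConnectedComponents ↥Z) ∧
    (Nonempty (ConnectedComponents ↥S₂ ≃ Fin 2) ∨
      Nonempty (ConnectedComponents ↥S₂ ≃ Fin 3)) := by
  obtain ⟨hequiv, k, hk2, hk3, hk⟩ :=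
    disconnected_image_components_eq_quartic_components_general le_rfl M₁ M₂ M₃ hM₁ hM₂ hM₃ Q₁ Q₂ Q₃
      hQ₁ hQ₂ hQ₃ hsm (isSmoothAtRealPoints_of_squarefree_map (isHomogeneous_pencilDet M₁ M₂ M₃)
        (map_pencilDet M₁ M₂ M₃ ▸ hsf)) S₂ Z hS₂ hZ hne hdisc
  refine ⟨hequiv, ?_⟩
  interval_cases k
  exacts [.inl hk, .inr hk]
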